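/- arXiv:1603.00045 — 7 statements merged into one kernel-verified Lean document; each statement's English description precedes it below -/
import Mathlib

section
/- Let R be a commutative noetherian ring, J an ideal of R, and T a multiplicatively closed subset of R. Then in the localization T^{-1}R one has T^{-1}\overline{J} = \overline{T^{-1}J}, i.e. the localization of the integral closure of J equals the integral closure of the localized ideal. -/
/-!
The set of elements integral over an ideal `J` is preserved by ring homomorphisms, which gives
the inclusion `T⁻¹ \overline J ⊆ \overline{T⁻¹ J}`.

Conversely, let `x / s` be integral over `T⁻¹ J`. Then so is its multiple `x / 1`, and the coefficients
`b i ∈ (T⁻¹ J) ^ i = T⁻¹ (J ^ i)` of its equation have a common denominator `u ∈ T`. Multiplying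
the equation by `u ^ n` gives an equation for `u * x / 1` with coefficients coming from `J ^ i`.
It holds in `R` after multiplication by some `v ∈ T`, and multiplying by `v ^ (n - 1)` again turns
it into an equation of integral dependence for `v * u * x` over `J`. Thus `x / s` is a unit
times the image of an element integral over `J`.
-/

/-- An element `x` is integral over the ideal `J`: it satisfies an equation
`x ^ n + a 1 * x ^ (n - 1) + ⋯ + a n = 0` with `a i ∈ J ^ i` for `1 ≤ i ≤ n`. -/
def IsIntegralOverIdeal {R : Type*} [CommRing R] (J : Ideal R) (x : R) : Prop :=
  ∃ n : ℕ, 0 < n ∧ ∃ a : ℕ → R, (∀ i, 1 ≤ i → i ≤ n → a i ∈ J ^ i) ∧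
    x ^ n + ∑ i ∈ Finset.Icc 1 n, a i * x ^ (n - i) = 0

/-- The integral closure `\overline J` of an ideal `J`: the ideal of all elements integral
over `J` (realized as the ideal generated by this set, which is in fact already an ideal). -/
def Ideal.intClosure {R : Type*} [CommRing R] (J : Ideal R) : Ideal R :=
  Ideal.span {x | IsIntegralOverIdeal J x}

theorem IsIntegralOverIdeal.map {R S : Type*} [CommRing R] [CommRing S] (f : R →+* S)
    {J : Ideal R} {x : R} (h : IsIntegralOverIdeal J x) :
    IsIntegralOverIdeal (J.map f) (f x) := by
  obtain ⟨n, hn, a, ha, he⟩ := h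
  refine ⟨n, hn, fun i => f (a i), fun i h1 h2 => ?_, ?_⟩
  · rw [← Ideal.map_pow]
    exact Ideal.mem_map_of_mem f (ha i h1 h2)
  · simpa using congrArg f he

/-- Multiplying a monic equation of degree `n` by `c ^ n` scales its `i`-th coefficient
by `c ^ i`. -/
theorem scaled_equation {R : Type*} [CommRing R] (n : ℕ) (a : ℕ → R) (c x : R) :
    (c * x) ^ n + ∑ i ∈ Finset.Icc 1 n, (c ^ i * a i) * (c * x) ^ (n - i) =
      c ^ n * (x ^ n + ∑ i ∈ Finset.Icc 1 n, a i * x ^ (n - i)) := by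
  rw [mul_add, Finset.mul_sum, mul_pow]
  congr 1
  refine Finset.sum_congr rfl fun i hi => ?_
  rw [mul_pow, ← pow_mul_pow_sub c (Finset.mem_Icc.mp hi).2]
  ring

theorem IsIntegralOverIdeal.const_mul {R : Type*} [CommRing R] {J : Ideal R} {x : R}
    (c : R) (h : IsIntegralOverIdeal J x) : IsIntegralOverIdeal J (c * x) := by
  obtain ⟨n, hn, a, ha, he⟩ := h
  refine ⟨n, hn, fun i => c ^ i * a i, fun i h1 h2 => Ideal.mul_mem_left _ _ (ha i h1 h2), ?_⟩
  rw [scaled_equation, he, mul_zero]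

/-- Finitely many elements of the extended ideals `T⁻¹ (J ^ i)` have a common denominator with
numerators in the respective `J ^ i`. -/
theorem exists_common_denominator {R : Type*} [CommRing R] (J : Ideal R) (T : Submonoid R)
    (s : Finset ℕ) (b : ℕ → Localization T)
    (hb : ∀ i ∈ s, b i ∈ J.map (algebraMap R (Localization T)) ^ i) :
    ∃ u ∈ T, ∀ i ∈ s, ∃ a ∈ J ^ i,
      algebraMap R (Localization T) a = algebraMap R (Localization T) u * b i := by
  induction s using Finset.induction_on with
  | empty => exact ⟨1, T.one_mem, by simp⟩
  | insert j s _ ih =>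
    obtain ⟨u, hu, h⟩ := ih fun i hi => hb i (Finset.mem_insert_of_mem hi)
    have hj := hb j (Finset.mem_insert_self j s)
    rw [← Ideal.map_pow, IsLocalization.mem_map_algebraMap_iff T] at hj
    obtain ⟨⟨⟨a, ha⟩, ⟨v, hv⟩⟩, hav⟩ := hj
    refine ⟨u * v, T.mul_mem hu hv, fun i hi => ?_⟩
    obtain rfl | hi := Finset.mem_insert.mp hi
    · refine ⟨u * a, Ideal.mul_mem_left _ _ ha, ?_⟩
      simp only at hav
      rw [map_mul, map_mul, ← hav]
      ring
    · obtain ⟨c, hc, hcu⟩ := h i hi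
      refine ⟨v * c, Ideal.mul_mem_left _ _ hc, ?_⟩
      rw [map_mul, map_mul, hcu]
      ring

/-- Integrality over `T⁻¹ J` descends to `J` after multiplication by an element of `T`. -/
theorem exists_mul_isIntegralOverIdeal {R : Type*} [CommRing R] (J : Ideal R)
    (T : Submonoid R) (x : R)
    (h : IsIntegralOverIdeal (J.map (algebraMap R (Localization T)))
      (algebraMap R (Localization T) x)) :
    ∃ t ∈ T, IsIntegralOverIdeal J (t * x) := by
  obtain ⟨n, hn, b, hb, he⟩ := h
  obtain ⟨u, hu, hub⟩ := exists_common_denominator J T (Finset.Icc 1 n) b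
    fun i hi => hb i (Finset.mem_Icc.mp hi).1 (Finset.mem_Icc.mp hi).2
  choose! a ha hab using hub
  -- The equation of `u * x`, whose coefficients `u ^ i * b i` have numerators `u ^ (i - 1) * a i`.
  have h0 : algebraMap R (Localization T)
      ((u * x) ^ n + ∑ i ∈ Finset.Icc 1 n, (u ^ (i - 1) * a i) * (u * x) ^ (n - i)) = 0 := by
    have key := scaled_equation n b (algebraMap R (Localization T) u)
      (algebraMap R (Localization T) x)
    rw [he, mul_zero] at key
    rw [← key]
    simp only [map_add, map_sum, map_mul, map_pow]
    congr 1
    refine Finset.sum_congr rfl fun i hi => ?_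
    rw [hab i hi, ← mul_assoc, pow_sub_one_mul (by have := (Finset.mem_Icc.mp hi).1; omega)]
  obtain ⟨⟨v, hv⟩, hv0⟩ := (IsLocalization.map_eq_zero_iff T (Localization T) _).mp h0
  refine ⟨v * u, T.mul_mem hv hu, n, hn, fun i => v ^ i * (u ^ (i - 1) * a i),
    fun i h1 h2 => Ideal.mul_mem_left _ _ (Ideal.mul_mem_left _ _
      (ha i (Finset.mem_Icc.mpr ⟨h1, h2⟩))), ?_⟩
  simp only at hv0
  rw [mul_assoc v u x, scaled_equation n (fun i => u ^ (i - 1) * a i) v (u * x),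
    ← pow_sub_one_mul hn.ne' v, mul_assoc, hv0, mul_zero]

/-- For a commutative noetherian ring `R`, an ideal `J` and a multiplicatively closed subset
`T` of `R`, in the localization `T⁻¹R` one has `T⁻¹ \overline J = \overline{T⁻¹ J}`. -/
theorem map_intClosure_eq_intClosure_map_localization {R : Type*} [CommRing R]
    [IsNoetherianRing R] (J : Ideal R) (T : Submonoid R) :
    (Ideal.intClosure J).map (algebraMap R (Localization T)) =
      Ideal.intClosure (J.map (algebraMap R (Localization T))) := by
  apply le_antisymm
  · rw [Ideal.intClosure, Ideal.map_span, Ideal.span_le]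
    rintro _ ⟨x, hx, rfl⟩
    exact Ideal.subset_span (hx.map _)
  · refine Ideal.span_le.mpr fun y hy => ?_
    obtain ⟨x, s, rfl⟩ := IsLocalization.exists_mk'_eq T y
    have hx := IsIntegralOverIdeal.const_mul (algebraMap R (Localization T) s) hy
    rw [IsLocalization.mk'_spec'] at hx
    obtain ⟨t, ht, htx⟩ := exists_mul_isIntegralOverIdeal J T x hx
    rw [SetLike.mem_coe, IsLocalization.mk'_mem_map_algebraMap_iff]
    exact ⟨t, ht, Ideal.subset_span htx⟩
end

section
/- Let R be a commutative noetherian ring and let J ⊆ I be a pair of ideals of R. Then J is a reduction of I if and only if I is integral over J, i.e. I ⊆ \overline{J}. -/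
/-- In a noetherian ring, if `J` is a reduction of `I`, every element of `I` is integral
over `J`. -/
theorem isIntegralOverIdeal_of_pow_succ_le {R : Type*} [CommRing R] [IsNoetherianRing R]
    {J I : Ideal R} {k : ℕ} (h : I ^ (k + 1) ≤ J * I ^ k) {x : R} (hx : x ∈ I) :
    IsIntegralOverIdeal J x := by
  let f : Module.End R ↥(I ^ k) := algebraMap R _ x
  have hf : LinearMap.range f ≤ J • (⊤ : Submodule R ↥(I ^ k)) := by
    rintro _ ⟨y, rfl⟩
    have hy : x * (y : R) ∈ J * I ^ k := h (by
      rw [pow_succ']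
      exact Ideal.mul_mem_mul hx y.2)
    rw [Submodule.mem_smul_top_iff]
    exact hy
  obtain ⟨p, hp, -, hc, h0⟩ :=
    LinearMap.exists_monic_and_natDegree_eq_and_coeff_mem_pow_and_aeval_eq_zero R f J hf
  have hpx : p.eval x * x ^ k = 0 := by
    have h1 := congrArg (fun g : Module.End R ↥(I ^ k) =>
      ((g ⟨x ^ k, Ideal.pow_mem_pow hx k⟩ : ↥(I ^ k)) : R)) h0
    simpa [f, Polynomial.aeval_algebraMap_apply] using h1
  -- The extra factor `x` makes the degree of the equation positive.
  refine ⟨p.natDegree + (k + 1), by omega,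
    fun i => if i ≤ p.natDegree then p.coeff (p.natDegree - i) else 0, ?_, ?_⟩
  · intro i _ _
    dsimp only
    split_ifs with hi
    · have := hc (p.natDegree - i)
      rwa [Nat.sub_sub_self hi] at this
    · exact zero_mem _
  · have h2 : p.eval x * x ^ (k + 1) = 0 := by rw [pow_succ, ← mul_assoc, hpx, zero_mul]
    rw [Polynomial.eval_eq_sum_range, ← Finset.sum_range_reflect, Finset.sum_range_succ',
      add_mul, Finset.sum_mul] at h2
    refine Eq.trans ?_ h2
    rw [add_comm]
    congr 1
    · rw [← Finset.sum_subset (s₁ := Finset.Icc 1 p.natDegree)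
        (Finset.Icc_subset_Icc_right (by omega))]
      · rw [Finset.range_eq_Ico, Finset.sum_Ico_add' (fun i => p.coeff (p.natDegree + 1 - 1 - i) *
          x ^ (p.natDegree + 1 - 1 - i) * x ^ (k + 1)) 0 p.natDegree 1]
        refine Finset.sum_congr (by ext; simp) fun i hi => ?_
        have hi := (Finset.mem_Icc.1 hi).2
        dsimp only
        rw [if_pos hi, mul_assoc, ← pow_add, Nat.add_sub_cancel,
          show p.natDegree + (k + 1) - i = p.natDegree - i + (k + 1) by omega]
      · intro i hi hi'
        dsimp only
        rw [if_neg (fun h => hi' (Finset.mem_Icc.2 ⟨(Finset.mem_Icc.1 hi).1, h⟩)), zero_mul]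
    · simp [hp.coeff_natDegree, pow_add]

/-- An integral equation for `x` over `J` says that `J` is a reduction of `J ⊔ (x)`; this is the
part of that assertion concerning powers of `x`, stated for any `L` containing `J` and `x`. -/
theorem IsIntegralOverIdeal.exists_pow_succ_mem {R : Type*} [CommRing R] {J : Ideal R} {x : R}
    (h : IsIntegralOverIdeal J x) {L : Ideal R} (hJ : J ≤ L) (hx : x ∈ L) :
    ∃ n : ℕ, x ^ (n + 1) ∈ J * L ^ n := by
  obtain ⟨n, hn, a, ha, h⟩ := h
  obtain ⟨m, rfl⟩ := Nat.exists_eq_add_of_le' hn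
  refine ⟨m, ?_⟩
  rw [eq_neg_of_add_eq_zero_left h]
  refine neg_mem (sum_mem fun i hi => ?_)
  obtain ⟨h1, h2⟩ := Finset.mem_Icc.1 hi
  obtain ⟨j, rfl⟩ := Nat.exists_eq_add_of_le' h1
  have hle : J ^ (j + 1) * L ^ (m - j) ≤ J * L ^ m := by
    rw [pow_succ', mul_assoc]
    refine Ideal.mul_mono_right ((Ideal.mul_mono_left (Ideal.pow_right_mono hJ j)).trans ?_)
    rw [← pow_add, Nat.add_sub_cancel' (by omega)]
  rw [show m + 1 - (j + 1) = m - j by omega]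
  exact hle (Ideal.mul_mem_mul (ha _ h1 h2) (Ideal.pow_mem_pow hx _))

/-- If `J` is a reduction of `K` and `x` is integral over `J`, then `J` is a reduction of
`K ⊔ (x)`. -/
theorem exists_pow_succ_le_sup_span_singleton {R : Type*} [CommRing R] {J K : Ideal R}
    (hJK : J ≤ K) {k : ℕ} (hk : K ^ (k + 1) ≤ J * K ^ k) {x : R}
    (hx : IsIntegralOverIdeal J x) :
    ∃ m : ℕ, (K ⊔ Ideal.span {x}) ^ (m + 1) ≤ J * (K ⊔ Ideal.span {x}) ^ m := by
  set L := K ⊔ Ideal.span {x} with hL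
  have hKL : K ≤ L := le_sup_left
  have hXL : Ideal.span {x} ≤ L := le_sup_right
  obtain ⟨n, hn⟩ := hx.exists_pow_succ_mem (hJK.trans hKL)
    (hXL (Ideal.mem_span_singleton_self x))
  have hn' : Ideal.span {x} ^ (n + 1) ≤ J * L ^ n := by
    rwa [Ideal.span_singleton_pow, Ideal.span_singleton_le_iff_mem]
  have hk' : K ^ (k + 1) ≤ J * L ^ k :=
    hk.trans (Ideal.mul_mono_right (Ideal.pow_right_mono hKL k))
  -- In a product of `k + n + 1` factors, either `k + 1` lie in `K` or `n + 1` lie in `(x)`.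
  refine ⟨k + n, ?_⟩
  conv_lhs => rw [hL, ← Submodule.add_eq_sup, add_pow]
  rw [Ideal.sum_eq_sup]
  refine Finset.sup_le fun i hi => Ideal.mul_le_left.trans ?_
  have hi := Finset.mem_range.1 hi
  by_cases hik : k + 1 ≤ i
  · obtain ⟨c, rfl⟩ := Nat.exists_eq_add_of_le hik
    rw [pow_add]
    refine (Ideal.mul_mono (Ideal.mul_mono hk' (Ideal.pow_right_mono hKL _))
      (Ideal.pow_right_mono hXL _)).trans ?_
    rw [mul_assoc, mul_assoc, ← pow_add, ← pow_add]
    exact Ideal.mul_mono_right (Ideal.pow_le_pow_right (by omega))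
  · obtain ⟨c, hc⟩ := Nat.exists_eq_add_of_le (show n + 1 ≤ k + n + 1 - i by omega)
    rw [hc, pow_add]
    refine (Ideal.mul_mono (Ideal.pow_right_mono hKL _)
      (Ideal.mul_mono hn' (Ideal.pow_right_mono hXL _))).trans ?_
    rw [mul_left_comm, mul_assoc, mul_left_comm, ← pow_add, mul_left_comm, ← pow_add]
    exact Ideal.mul_mono_right (Ideal.pow_le_pow_right (by omega))

theorem exists_pow_succ_le_sup_span_finset {R : Type*} [CommRing R] {J : Ideal R}
    (T : Finset R) (hT : ∀ x ∈ T, IsIntegralOverIdeal J x) :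
    ∃ m : ℕ, (J ⊔ Ideal.span (T : Set R)) ^ (m + 1) ≤ J * (J ⊔ Ideal.span (T : Set R)) ^ m := by
  classical
  induction T using Finset.induction_on with
  | empty => exact ⟨0, by simp⟩
  | insert x T _ ih =>
    obtain ⟨k, hk⟩ := ih fun y hy => hT y (Finset.mem_insert_of_mem hy)
    have h := exists_pow_succ_le_sup_span_singleton le_sup_left hk
      (hT x (Finset.mem_insert_self x T))
    rwa [sup_assoc, sup_comm (Ideal.span (T : Set R)), ← Ideal.span_insert,
      ← Finset.coe_insert] at h


/-- For ideals `J ⊆ I` of a commutative noetherian ring `R`, `J` is a reduction of `I`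
(i.e. `I ^ (k + 1) = J * I ^ k` for some `k ≥ 0`) if and only if `I` is integral over `J`,
i.e. `I ⊆ \overline J`. -/
theorem reduction_iff_le_intClosure {R : Type*} [CommRing R] [IsNoetherianRing R]
    (J I : Ideal R) (hJI : J ≤ I) :
    (∃ k : ℕ, I ^ (k + 1) = J * I ^ k) ↔ I ≤ Ideal.intClosure J := by
  constructor
  · rintro ⟨k, hk⟩ x hx
    exact Ideal.subset_span (isIntegralOverIdeal_of_pow_succ_le hk.le hx)
  · intro h
    have hint : ∀ x ∈ I, IsIntegralOverIdeal J x := by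
      obtain ⟨T, hT, hspan⟩ := Submodule.fg_span_iff_fg_span_finset_subset (R := R)
        {x | IsIntegralOverIdeal J x} |>.1 (IsNoetherian.noetherian _)
      obtain ⟨m, hm⟩ := exists_pow_succ_le_sup_span_finset T fun x hx => hT hx
      intro x hx
      refine isIntegralOverIdeal_of_pow_succ_le hm (Ideal.mem_sup_right ?_)
      have hx' : x ∈ Submodule.span R {x | IsIntegralOverIdeal J x} := h hx
      rwa [hspan] at hx'
    obtain ⟨T, hT⟩ := IsNoetherian.noetherian I
    have hT' : Ideal.span (T : Set R) = I := hT
    obtain ⟨m, hm⟩ := exists_pow_succ_le_sup_span_finset (J := J) T fun x hx =>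
      hint x (hT' ▸ Ideal.subset_span hx)
    rw [hT', sup_eq_right.2 hJI] at hm
    exact ⟨m, hm.antisymm ((Ideal.mul_mono_left hJI).trans_eq (pow_succ' I m).symm)⟩
end

section
/- Let (R, m) be a commutative noetherian local ring and let R̂ be the m-adic completion of R. Then i(R) = i(R̂); in particular, for an integer k ≥ 0, \overline{J}^n ⊆ J^{n−k} holds for every ideal J of R and every n ≥ k if and only if \overline{K}^n ⊆ K^{n−k} holds for every ideal K of R̂ and every n ≥ k. -/
/-- `IntDimBound R k` : `\overline J ^ n ⊆ J ^ (n - k)` for every ideal `J` of `R` and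
every `n ≥ k`. -/
def IntDimBound (R : Type*) [CommRing R] (k : ℕ) : Prop :=
  ∀ (J : Ideal R) (n : ℕ), k ≤ n → (Ideal.intClosure J) ^ n ≤ J ^ (n - k)

/-- The integral dimension `i(R)` : the least integer `k ≥ 0` such that
`\overline J ^ n ⊆ J ^ (n - k)` for every ideal `J` of `R` and every `n ≥ k`,
and `∞` if no such `k` exists. -/
noncomputable def integralDimension (R : Type*) [CommRing R] : ℕ∞ :=
  sInf {k : ℕ∞ | ∃ k0 : ℕ, k = k0 ∧ IntDimBound R k0}

/-! ### Preliminaries on sums of ideals -/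

open IsLocalRing in
/-- Krull's intersection theorem in `R ⧸ I`: ideals of a noetherian local ring are closed. -/
theorem mem_of_forall_mem_sup_maximalIdeal_pow {R : Type*} [CommRing R] [IsNoetherianRing R]
    [IsLocalRing R] (I : Ideal R) (x : R) (h : ∀ s : ℕ, x ∈ I ⊔ maximalIdeal R ^ s) : x ∈ I := by
  rw [← Ideal.Quotient.eq_zero_iff_mem]
  refine (inferInstance : IsHausdorff (maximalIdeal R) (R ⧸ I)).haus' _ fun s ↦ ?_
  obtain ⟨y, hy, z, hz, rfl⟩ := Submodule.mem_sup.1 (h s)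
  rw [SModEq.zero, map_add, Ideal.Quotient.eq_zero_iff_mem.2 hy, zero_add]
  have := Submodule.smul_mem_smul hz (Submodule.mem_top (x := (1 : R ⧸ I)))
  rwa [Algebra.smul_def, mul_one] at this

theorem Ideal.sup_pow_le_pow_sup {R : Type*} [CommRing R] (K I : Ideal R) (j : ℕ) :
    (K ⊔ I) ^ j ≤ K ^ j ⊔ I := by
  induction j with
  | zero => simp
  | succ j ih =>
    have h1 : K ^ j * K ≤ K ^ (j + 1) ⊔ I := (pow_succ K j).ge.trans le_sup_left
    have h2 (A B : Ideal R) : I * A ≤ B ⊔ I := le_sup_of_le_right Ideal.mul_le_left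
    calc (K ⊔ I) ^ (j + 1) = (K ⊔ I) ^ j * (K ⊔ I) := pow_succ _ _
      _ ≤ (K ^ j ⊔ I) * (K ⊔ I) := Ideal.mul_mono_left ih
      _ = (K ^ j * K ⊔ I * K) ⊔ I * (K ^ j ⊔ I) := by
          rw [Ideal.mul_sup, Ideal.sup_mul, mul_comm _ I]
      _ ≤ K ^ (j + 1) ⊔ I := sup_le (sup_le h1 (h2 _ _)) (h2 _ _)

/-- Elements of `(L + (x)) ^ n` are polynomials of degree at most `n` in `x`, with the coefficient
of `x ^ (n - i)` in `L ^ i`. -/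
theorem Ideal.mem_sup_span_singleton_pow {R : Type*} [CommRing R] {L : Ideal R} {x : R} {n : ℕ}
    {y : R} (hy : y ∈ (L ⊔ Ideal.span {x}) ^ n) :
    ∃ a : ℕ → R, (∀ i, a i ∈ L ^ i) ∧ y = ∑ i ∈ Finset.range (n + 1), a i * x ^ (n - i) := by
  induction n generalizing y with
  | zero =>
    exact ⟨fun i ↦ if i = 0 then y else 0, fun i ↦ by by_cases h : i = 0 <;> simp [h], by simp⟩
  | succ n ih =>
    rw [pow_succ', Ideal.sup_mul] at hy
    obtain ⟨u, hu, v, hv, rfl⟩ := Submodule.mem_sup.1 hy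
    have h1 : ∃ a : ℕ → R, (∀ i, a i ∈ L ^ (i + 1)) ∧
        u = ∑ i ∈ Finset.range (n + 1), a i * x ^ (n - i) := by
      clear hy hv
      induction hu using Submodule.mul_induction_on' with
      | mem_mul_mem l hl w hw =>
        obtain ⟨a, ha, rfl⟩ := ih hw
        refine ⟨fun i ↦ l * a i, fun i ↦ ?_, ?_⟩
        · rw [pow_succ']
          exact Ideal.mul_mem_mul hl (ha i)
        · rw [Finset.mul_sum]
          exact Finset.sum_congr rfl fun i _ ↦ by ring
      | add p _ q _ hp hq =>
        obtain ⟨a, ha, rfl⟩ := hp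
        obtain ⟨b, hb, rfl⟩ := hq
        refine ⟨fun i ↦ a i + b i, fun i ↦ add_mem (ha i) (hb i), ?_⟩
        rw [← Finset.sum_add_distrib]
        exact Finset.sum_congr rfl fun i _ ↦ by ring
    obtain ⟨a, ha, rfl⟩ := h1
    obtain ⟨w, hw, rfl⟩ := Ideal.mem_span_singleton_mul.1 hv
    obtain ⟨b, hb, rfl⟩ := ih hw
    -- `a` is shifted by one, as its terms already carry an extra factor in `L`; `b` is cut off at
    -- `n + 1`, as multiplying by `x` raises the exponent and leaves no constant term.
    let a' : ℕ → R := fun i ↦ if i = 0 then 0 else a (i - 1)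
    let b' : ℕ → R := fun i ↦ if i = n + 1 then 0 else b i
    refine ⟨fun i ↦ a' i + b' i, fun i ↦ add_mem ?_ ?_, ?_⟩
    · rcases i with _ | i
      · simp [a']
      · simpa [a'] using ha i
    · by_cases h : i = n + 1
      · simp [b', h]
      · simpa [b', h] using hb i
    · have e1 : ∑ i ∈ Finset.range (n + 1 + 1), a' i * x ^ (n + 1 - i) =
          ∑ i ∈ Finset.range (n + 1), a i * x ^ (n - i) := by
        rw [Finset.sum_range_succ']
        simp [a']
      have e2 : ∑ i ∈ Finset.range (n + 1 + 1), b' i * x ^ (n + 1 - i) =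
          x * ∑ i ∈ Finset.range (n + 1), b i * x ^ (n - i) := by
        rw [Finset.sum_range_succ, Finset.mul_sum]
        simp only [b', if_true, zero_mul, add_zero]
        refine Finset.sum_congr rfl fun i hi ↦ ?_
        have hi' := Finset.mem_range.1 hi
        rw [if_neg (by lia), show n + 1 - i = (n - i) + 1 by lia]
        ring
      rw [← e1, ← e2, ← Finset.sum_add_distrib]
      exact Finset.sum_congr rfl fun i _ ↦ by ring

theorem Ideal.sup_span_singleton_pow_le {R : Type*} [CommRing R] (L : Ideal R) (x : R) (n : ℕ) :
    (L ⊔ Ideal.span {x}) ^ (n + 1) ≤ L * (L ⊔ Ideal.span {x}) ^ n ⊔ Ideal.span {x ^ (n + 1)} := by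
  induction n with
  | zero => simp
  | succ n ih =>
    rw [pow_succ' _ (n + 1)]
    nth_rw 1 [Ideal.sup_mul]
    refine sup_le le_sup_left ((Ideal.mul_mono_right ih).trans ?_)
    rw [Ideal.mul_sup]
    refine sup_le_sup ?_ ?_
    · rw [mul_left_comm, pow_succ']
      exact Ideal.mul_mono_right (Ideal.mul_mono_left le_sup_right)
    · rw [Ideal.span_singleton_mul_span_singleton, ← pow_succ']

/-! ### Integrality over an ideal -/

/-- `x` is integral over `L` exactly when `L` is a reduction of `L + (x)`. In particular integrality
of `x` over `L` depends on `x` only through the ideal `L + (x)`. -/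
theorem isIntegralOverIdeal_iff {R : Type*} [CommRing R] (L : Ideal R) (x : R) :
    IsIntegralOverIdeal L x ↔
      ∃ n : ℕ, (L ⊔ Ideal.span {x}) ^ (n + 1) ≤ L * (L ⊔ Ideal.span {x}) ^ n := by
  constructor
  · rintro ⟨n, hn, a, ha, h⟩
    obtain ⟨n, rfl⟩ := Nat.exists_eq_succ_of_ne_zero hn.ne'
    refine ⟨n, (L.sup_span_singleton_pow_le x n).trans (sup_le le_rfl ?_)⟩
    rw [Ideal.span_singleton_le_iff_mem, eq_neg_of_add_eq_zero_left h]
    refine neg_mem (sum_mem fun i hi ↦ ?_)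
    obtain ⟨hi1, hi2⟩ := Finset.mem_Icc.1 hi
    obtain ⟨i, rfl⟩ := Nat.exists_eq_succ_of_ne_zero (show i ≠ 0 by lia)
    have h1 : a i.succ * x ^ (n.succ - i.succ) ∈
        L * (L ⊔ Ideal.span {x}) ^ i * (L ⊔ Ideal.span {x}) ^ (n - i) := by
      refine Ideal.mul_mem_mul ?_ ?_
      · have := ha _ hi1 hi2
        rw [Nat.succ_eq_add_one, pow_succ'] at this
        exact Ideal.mul_mono_right (Ideal.pow_right_mono le_sup_left i) this
      · rw [show n.succ - i.succ = n - i by lia]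
        exact Ideal.pow_mem_pow (Ideal.mem_sup_right (Ideal.mem_span_singleton_self x)) _
    rwa [mul_assoc, ← pow_add, show i + (n - i) = n by lia] at h1
  · rintro ⟨n, hn⟩
    have hx : x ^ (n + 1) ∈ L * (L ⊔ Ideal.span {x}) ^ n :=
      hn (Ideal.pow_mem_pow (Ideal.mem_sup_right (Ideal.mem_span_singleton_self x)) _)
    suffices H : ∀ y ∈ L * (L ⊔ Ideal.span {x}) ^ n, ∃ a : ℕ → R, (∀ i, a i ∈ L ^ i) ∧
        y = ∑ i ∈ Finset.Icc 1 (n + 1), a i * x ^ (n + 1 - i) by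
      obtain ⟨a, ha, h⟩ := H _ hx
      refine ⟨n + 1, n.succ_pos, fun i ↦ -a i, fun i _ _ ↦ neg_mem (ha i), ?_⟩
      simp only [neg_mul, Finset.sum_neg_distrib]
      rw [← h, add_neg_cancel]
    intro y hy
    induction hy using Submodule.mul_induction_on' with
    | mem_mul_mem l hl w hw =>
      obtain ⟨a, ha, rfl⟩ := Ideal.mem_sup_span_singleton_pow hw
      refine ⟨fun i ↦ if i = 0 then 0 else l * a (i - 1), fun i ↦ ?_, ?_⟩
      · rcases i with _ | i
        · simp
        · simp only [Nat.add_eq_zero_iff, one_ne_zero, and_false, if_false, Nat.add_sub_cancel]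
          rw [pow_succ']
          exact Ideal.mul_mem_mul hl (ha i)
      · rw [← Finset.Ico_add_one_right_eq_Icc, Finset.sum_Ico_eq_sum_range, Finset.mul_sum]
        refine Finset.sum_congr rfl fun i _ ↦ ?_
        rw [show n + 1 - (1 + i) = n - i by lia]
        simp [mul_assoc]
    | add p _ q _ hp hq =>
      obtain ⟨a, ha, rfl⟩ := hp
      obtain ⟨b, hb, rfl⟩ := hq
      refine ⟨fun i ↦ a i + b i, fun i ↦ add_mem (ha i) (hb i), ?_⟩
      rw [← Finset.sum_add_distrib]
      exact Finset.sum_congr rfl fun i _ ↦ by ring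

theorem Ideal.le_intClosure {R : Type*} [CommRing R] (J : Ideal R) : J ≤ J.intClosure := by
  refine fun x hx ↦ Ideal.subset_span ((isIntegralOverIdeal_iff J x).2 ⟨0, ?_⟩)
  simpa using hx

theorem Ideal.intClosure_mono {R : Type*} [CommRing R] {J K : Ideal R} (h : J ≤ K) :
    J.intClosure ≤ K.intClosure :=
  Ideal.span_mono fun _ ⟨n, hn, a, ha, he⟩ ↦
    ⟨n, hn, a, fun i h1 h2 ↦ Ideal.pow_right_mono h i (ha i h1 h2), he⟩

theorem Ideal.map_intClosure_le {R S : Type*} [CommRing R] [CommRing S] (f : R →+* S)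
    (J : Ideal R) : J.intClosure.map f ≤ (J.map f).intClosure := by
  rw [Ideal.intClosure, Ideal.map_span, Ideal.span_le]
  rintro _ ⟨x, ⟨n, hn, a, ha, h⟩, rfl⟩
  refine Ideal.subset_span ⟨n, hn, fun i ↦ f (a i), fun i h1 h2 ↦ ?_, ?_⟩
  · rw [← Ideal.map_pow]
    exact Ideal.mem_map_of_mem f (ha i h1 h2)
  · simpa using congrArg f h

/-! ### Faithfully flat extensions with dense image -/

section FaithfullyFlat

variable {R S : Type*} [CommRing R] [CommRing S] [Algebra R S] [Module.FaithfullyFlat R S]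

theorem IntDimBound.of_faithfullyFlat {k : ℕ} (h : IntDimBound S k) : IntDimBound R k := by
  intro J n hn
  rw [← Ideal.comap_map_eq_self_of_faithfullyFlat (B := S) (J ^ (n - k)), ← Ideal.map_le_iff_le_comap,
    Ideal.map_pow, Ideal.map_pow]
  exact (Ideal.pow_right_mono (J.map_intClosure_le _) n).trans (h _ n hn)

/-- Integrality descends along faithfully flat maps: the reduction condition is an inclusion of
ideals extended from `R`, which can be contracted. -/
theorem isIntegralOverIdeal_of_map {J : Ideal R} {r : R}
    (h : IsIntegralOverIdeal (J.map (algebraMap R S)) (algebraMap R S r)) :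
    IsIntegralOverIdeal J r := by
  rw [isIntegralOverIdeal_iff] at h ⊢
  obtain ⟨n, hn⟩ := h
  refine ⟨n, ?_⟩
  rw [← Set.image_singleton, ← Ideal.map_span, ← Ideal.map_sup, ← Ideal.map_pow, ← Ideal.map_pow,
    ← Ideal.map_mul, Ideal.map_le_iff_le_comap, Ideal.comap_map_eq_self_of_faithfullyFlat] at hn
  exact hn

/-- If `R → S ⧸ J S` is surjective, then integral closure commutes with extension of `J` to `S`
(the other inclusion is `Ideal.map_intClosure_le`). -/
theorem Ideal.intClosure_map_le {J : Ideal R}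
    (hJ : ∀ y : S, ∃ r : R, y - algebraMap R S r ∈ J.map (algebraMap R S)) :
    (J.map (algebraMap R S)).intClosure ≤ J.intClosure.map (algebraMap R S) := by
  refine Ideal.span_le.2 fun x (hx : IsIntegralOverIdeal _ x) ↦ ?_
  obtain ⟨r, hr⟩ := hJ x
  have key : J.map (algebraMap R S) ⊔ Ideal.span {algebraMap R S r} =
      J.map (algebraMap R S) ⊔ Ideal.span {x} := by
    refine le_antisymm (sup_le le_sup_left ?_) (sup_le le_sup_left ?_) <;>
      rw [Ideal.span_singleton_le_iff_mem]
    · rw [show algebraMap R S r = -(x - algebraMap R S r) + x by ring]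
      exact add_mem (neg_mem (Ideal.mem_sup_left hr))
        (Ideal.mem_sup_right (Ideal.mem_span_singleton_self x))
    · rw [show x = (x - algebraMap R S r) + algebraMap R S r by ring]
      exact add_mem (Ideal.mem_sup_left hr) (Ideal.mem_sup_right (Ideal.mem_span_singleton_self _))
  have hr' : r ∈ J.intClosure := by
    refine Ideal.subset_span (isIntegralOverIdeal_of_map (S := S) ?_)
    rw [isIntegralOverIdeal_iff] at hx ⊢
    rwa [key]
  rw [SetLike.mem_coe, show x = (x - algebraMap R S r) + algebraMap R S r by ring]
  exact add_mem (Ideal.map_mono J.le_intClosure hr) (Ideal.mem_map_of_mem _ hr')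

open IsLocalRing in
/-- Bounds for `R` pass to `S` when `R → S` is faithfully flat with dense image: an ideal `K` of `S`
is approximated by the extended ideals `K + M ^ s`, where `M` is the maximal ideal of `S`. -/
theorem IntDimBound.of_dense [IsLocalRing R] [IsNoetherianRing S] [IsLocalRing S]
    (hm : (maximalIdeal R).map (algebraMap R S) = maximalIdeal S)
    (hd : ∀ (s : ℕ) (y : S), ∃ r : R, y - algebraMap R S r ∈ maximalIdeal S ^ s)
    {k : ℕ} (h : IntDimBound R k) : IntDimBound S k := by
  intro K n hn x hx
  refine mem_of_forall_mem_sup_maximalIdeal_pow _ x fun s ↦ Ideal.sup_pow_le_pow_sup _ _ _ ?_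
  set L := K ⊔ maximalIdeal S ^ s with hL
  set J := L.comap (algebraMap R S)
  have hmJ : maximalIdeal S ^ s ≤ J.map (algebraMap R S) := by
    rw [← hm, ← Ideal.map_pow]
    refine Ideal.map_mono (Ideal.map_le_iff_le_comap.1 ?_)
    rw [Ideal.map_pow, hm]
    exact le_sup_right
  have hJL : J.map (algebraMap R S) = L := by
    refine le_antisymm Ideal.map_comap_le fun y hy ↦ ?_
    obtain ⟨r, hr⟩ := hd s y
    have hrJ : r ∈ J := by
      rw [Ideal.mem_comap, show algebraMap R S r = y - (y - algebraMap R S r) by ring]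
      exact sub_mem hy (Ideal.mem_sup_right hr)
    rw [show y = (y - algebraMap R S r) + algebraMap R S r by ring]
    exact add_mem (hmJ hr) (Ideal.mem_map_of_mem _ hrJ)
  have h1 : K.intClosure ≤ J.intClosure.map (algebraMap R S) := by
    refine (Ideal.intClosure_mono (le_sup_left.trans hJL.ge)).trans
      (Ideal.intClosure_map_le fun y ↦ ?_)
    obtain ⟨r, hr⟩ := hd s y
    exact ⟨r, hmJ hr⟩
  have h2 := Ideal.pow_right_mono h1 n hx
  rw [← Ideal.map_pow] at h2
  rw [← hJL, ← Ideal.map_pow]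
  exact Ideal.map_mono (h J n hn) h2

end FaithfullyFlat

/-! ### The adic completion -/

section Completion

variable {R : Type*} [CommRing R]

theorem AdicCompletion.exists_sub_mem_map_pow {I : Ideal R} (fg : I.FG) (s : ℕ)
    (y : AdicCompletion I R) :
    ∃ r : R, y - algebraMap R _ r ∈ I.map (algebraMap R (AdicCompletion I R)) ^ s := by
  obtain ⟨r, hr⟩ := Submodule.mkQ_surjective _ (AdicCompletion.eval I R s y)
  refine ⟨r, ?_⟩
  have : y - algebraMap R (AdicCompletion I R) r ∈ (AdicCompletion.eval I R s).ker := by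
    rw [LinearMap.mem_ker, map_sub, ← hr]
    exact sub_self _
  rw [← AdicCompletion.pow_smul_top_eq_ker_eval fg, Ideal.smul_top_eq_map, Ideal.map_pow] at this
  exact this

/-- The adic completion of a noetherian ring is noetherian: if `I` is generated by `x 1, …, x d`, the
polynomial map sending the variables to the `x i` induces a surjection on completions, from
a power series ring in `d` variables over `R`. -/
theorem AdicCompletion.isNoetherianRing [IsNoetherianRing R] (I : Ideal R) :
    IsNoetherianRing (AdicCompletion I R) := by
  have fg : I.FG := I.fg_of_isNoetherianRing
  obtain ⟨d, x, hx⟩ := Submodule.fg_iff_exists_fin_generating_family.1 fg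
  let P := MvPolynomial (Fin d) R
  let V : Ideal P := MvPolynomial.idealOfVars (Fin d) R
  let φ : P →+* R := MvPolynomial.eval x
  have hφ : V.map φ = I := by
    rw [← hx]
    simp only [V, MvPolynomial.idealOfVars, Ideal.map_span, ← Set.range_comp]
    congr 2
    ext i
    exact MvPolynomial.eval_X i
  have hle (n : ℕ) : V ^ n ≤ (I ^ n).comap φ := by
    rw [← Ideal.map_le_iff_le_comap, Ideal.map_pow, hφ]
  let F : AdicCompletion V P →+* AdicCompletion I R :=
    AdicCompletion.liftRingHom I
      (fun n ↦ (Ideal.quotientMap (I ^ n) φ (hle n)).comp (AdicCompletion.evalₐ V n : _ →+* _))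
      (by
        intro m n hmn
        ext y
        obtain ⟨y, rfl⟩ := AdicCompletion.mk_surjective _ _ y
        have h := congrArg (Ideal.quotientMap (I ^ m) φ (hle m))
          (AdicCompletion.Ideal.mk_eq_mk V hmn y)
        simpa using h)
  have hF (p : P) : F (algebraMap P _ p) = algebraMap R _ (φ p) := by
    refine AdicCompletion.ext_evalₐ fun n ↦ ?_
    simp [F]
  let A := AdicCompletion V P
  have hAc : IsAdicComplete (V.map (algebraMap P A)) A :=
    AdicCompletion.isAdicComplete_self V (MvPolynomial.idealOfVars_fg _ R)
  have hmap : (V.map (algebraMap P A)).map F = I.map (algebraMap R _) := by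
    calc (V.map (algebraMap P A)).map F = (V.map φ).map (algebraMap R _) := by
          rw [Ideal.map_map, Ideal.map_map]
          exact congrArg (fun g ↦ V.map g) (RingHom.ext hF)
      _ = _ := by rw [hφ]
  have hRc := AdicCompletion.isAdicComplete_self I fg
  have hsurj : Function.Surjective F := by
    have : IsHausdorff ((V.map (algebraMap P A)).map F) (AdicCompletion I R) := by
      rw [hmap]; infer_instance
    -- By completeness it suffices to check surjectivity modulo the extension of `I`.
    refine surjective_of_mk_map_comp_surjective (I := V.map (algebraMap P A)) F fun y ↦ ?_
    obtain ⟨y, rfl⟩ := Ideal.Quotient.mk_surjective y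
    obtain ⟨r, hr⟩ := AdicCompletion.exists_sub_mem_map_pow fg 1 y
    refine ⟨algebraMap P A (MvPolynomial.C r), ?_⟩
    rw [RingHom.comp_apply, hF, eq_comm, Ideal.Quotient.eq, hmap]
    simpa [φ, show MvPolynomial.eval x (MvPolynomial.C r) = r from MvPolynomial.eval_C r] using hr
  have hA : IsNoetherianRing A :=
    isNoetherianRing_of_ringEquiv _ (MvPowerSeries.toAdicCompletionAlgEquiv (Fin d) R).toRingEquiv
  exact isNoetherianRing_of_surjective A _ F hsurj

end Completion

theorem integralDimension_eq_adicCompletion {R : Type*} [CommRing R] [IsNoetherianRing R]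
    [IsLocalRing R] :
    integralDimension R =
      integralDimension (AdicCompletion (IsLocalRing.maximalIdeal R) R) ∧
    ∀ k : ℕ, IntDimBound R k ↔
      IntDimBound (AdicCompletion (IsLocalRing.maximalIdeal R) R) k := by
  have hN := AdicCompletion.isNoetherianRing (IsLocalRing.maximalIdeal R)
  have hff : Module.FaithfullyFlat R (AdicCompletion (IsLocalRing.maximalIdeal R) R) :=
    Module.FaithfullyFlat.of_flat_of_isLocalHom
  have hm := (AdicCompletion.maximalIdeal_eq_map (R := R)).symm
  have key (k : ℕ) : IntDimBound R k ↔
      IntDimBound (AdicCompletion (IsLocalRing.maximalIdeal R) R) k := by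
    refine ⟨fun h ↦ h.of_dense hm fun s y ↦ ?_, fun h ↦ h.of_faithfullyFlat⟩
    rw [← hm]
    exact AdicCompletion.exists_sub_mem_map_pow (Ideal.fg_of_isNoetherianRing _) s y
  refine ⟨?_, key⟩
  simp only [integralDimension, key]
end

section
/- Let (R, m) be a commutative noetherian local ring of Krull dimension d > 0. Then there exists a system of parameters x_1, x_2, …, x_d of R such that for all integers n > 0, the element (x_1 x_2 ⋯ x_d)^n does not belong to the ideal (x_1^{n+1}, x_2^{n+1}, …, x_d^{n+1}). -/
/-!
For a system of parameters `x 1, …, x d`, the top local cohomology module of `R` is the direct limit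
of the modules `R ⧸ (x 1 ^ t, …, x d ^ t)` under multiplication by `x 1 * ⋯ * x d`. If for every
`t` the sequence of powers `x i ^ t` violated the required non-membership for some `n`, then every
element of this limit would be zero (`TC.N_subsingleton`). So it is enough to prove that the top
local cohomology does not vanish; the required system of parameters is then `x i ^ t` for a
suitable `t`.

Local cohomology is computed here by the Čech complex of a list `l`, built as an iterated mapping
cone of localization maps. Only the ungraded total complex and its top cohomology `N` are recorded
(`TC`, `TC.cech`). Two facts carry the non-vanishing (`exists_N_ne_zero`).

* If `m` is the only prime containing `I` and `l`, the cohomology of the Čech complex of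
  `R ⧸ I` is artinian (`isArtinian_H`). This is a noetherian induction on `I`: either `m` is an
  associated prime of `R ⧸ I`, and one divides by a simple submodule, or the ideal generated by
  `l` contains an element regular on `R ⧸ I`, and one divides by it and applies Melkersson's
  criterion for torsion modules (`isArtinian_of_torsion`). By the cone construction, the `x`-power
  torsion `Γ` of the top cohomology for `l` is then artinian whenever `m` is the only prime
  containing `I` and `x :: l` (`TC.isArtinian_torsion`).
* An artinian module has finitely many attached primes. In the form used here: outside a finite
  set of primes not containing `y`, every `a` satisfies `y ^ j Γ ⊆ a Γ` for some `j`
  (`exists_attached`).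

The non-vanishing is proved by induction on the length of `l`, for all ideals `I` such that no
shorter list generates an `m`-primary ideal modulo `I`. If the top cohomology for `x :: l` is zero,
the one for `l`, say `N`, surjects onto its localization at `x`, whence `N = Γ + a N` for every `a`
with `I + (a) + (l)` still `m`-primary (`exists_torsion_add`). If `l` is empty, `a = x` gives
`x ^ k ∈ I` for some `k` and a contradiction. Otherwise let `y` be the head of `l`; some
`a = x + y ^ (i + 1)` avoids the finite set of primes of the second fact, so `y ^ j N ⊆ a N`. The top
cohomology of `R ⧸ (I + (a))` for `l` is a quotient of `N` killed by `a`, hence killed by `y ^ j`;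
being divisible by `y`, it is zero, which contradicts the induction hypothesis.
-/

universe u

/-! ### Localization at the powers of an element -/

section Localization
variable {R : Type u} [CommRing R] (x : R)

/-- The localization `M_x`. -/
abbrev Loc (M : Type u) [AddCommGroup M] [Module R M] : Type u :=
  LocalizedModule (Submonoid.powers x) M

variable {M M' : Type u} [AddCommGroup M] [Module R M] [AddCommGroup M'] [Module R M']

/-- The canonical map `M → M_x`. -/
noncomputable def toLoc (M : Type u) [AddCommGroup M] [Module R M] : M →ₗ[R] Loc x M :=
  LocalizedModule.mkLinearMap (Submonoid.powers x) M

/-- The map `M_x → M'_x` induced by `f : M → M'`. -/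
noncomputable def locMap (f : M →ₗ[R] M') : Loc x M →ₗ[R] Loc x M' :=
  IsLocalizedModule.map (Submonoid.powers x)
    (LocalizedModule.mkLinearMap (Submonoid.powers x) M)
    (LocalizedModule.mkLinearMap (Submonoid.powers x) M') f

@[simp] lemma locMap_toLoc (f : M →ₗ[R] M') (m : M) :
    locMap x f (toLoc x M m) = toLoc x M' (f m) :=
  IsLocalizedModule.map_apply _ _ _ _ _

lemma toLoc_eq_zero {m : M} (h : toLoc x M m = 0) : ∃ k : ℕ, x ^ k • m = 0 := by
  obtain ⟨⟨_, k, rfl⟩, hs⟩ := (IsLocalizedModule.eq_zero_iff (Submonoid.powers x)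
    (LocalizedModule.mkLinearMap (Submonoid.powers x) M)).1 h
  exact ⟨k, hs⟩

lemma exists_toLoc (v : Loc x M) : ∃ (k : ℕ) (m : M), x ^ k • v = toLoc x M m := by
  obtain ⟨⟨m, ⟨_, k, rfl⟩⟩, hs⟩ := IsLocalizedModule.surj (Submonoid.powers x)
    (LocalizedModule.mkLinearMap (Submonoid.powers x) M) v
  exact ⟨k, m, hs⟩

variable {x} in
lemma loc_eq_zero {v : Loc x M} {k : ℕ} (h : x ^ k • v = 0) : v = 0 := by
  refine IsLocalizedModule.smul_injective (LocalizedModule.mkLinearMap (Submonoid.powers x) M)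
    (⟨x ^ k, k, rfl⟩ : Submonoid.powers x) ?_
  simpa [Submonoid.smul_def] using h

variable {x} in
lemma loc_cancel {v w : Loc x M} {k : ℕ} (h : x ^ k • v = x ^ k • w) : v = w := by
  rw [← sub_eq_zero]
  apply loc_eq_zero (k := k)
  rw [smul_sub, h, sub_self]

/-- Division by `x ^ k` on `M_x`. -/
noncomputable def locDiv (k : ℕ) : Loc x M →ₗ[R] Loc x M :=
  LocalizedModule.divBy (⟨x ^ k, k, rfl⟩ : Submonoid.powers x)

@[simp] lemma smul_locDiv (k : ℕ) (v : Loc x M) : x ^ k • locDiv x k v = v :=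
  LocalizedModule.mul_by_divBy (⟨x ^ k, k, rfl⟩ : Submonoid.powers x) v

lemma locDiv_smul (k : ℕ) (v : Loc x M) : locDiv x k (x ^ k • v) = v := by
  rw [map_smul, smul_locDiv]

lemma locMap_surjective {f : M →ₗ[R] M'} (hf : Function.Surjective f) :
    Function.Surjective (locMap x f) := by
  intro v
  obtain ⟨k, m, h⟩ := exists_toLoc x v
  obtain ⟨m, rfl⟩ := hf m
  refine ⟨locDiv x k (toLoc x M m), loc_cancel (k := k) ?_⟩
  rw [← map_smul, smul_locDiv, locMap_toLoc, h]

end Localization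

/-! ### The Čech complex as an iterated mapping cone -/

/-- A cochain complex with a distinguished top cohomology module, the grading being forgotten:
`C` is the direct sum of all terms with differential `d`, `N` is the cohomology in the top degree,
and `P` takes the class of the top-degree component of a cochain. `Z` is a submodule of cocycles,
thought of as top-degree ones, that surjects onto `N` and in which the kernel of `P` consists of
boundaries. -/
structure TC (R : Type u) [CommRing R] where
  C : Type u
  N : Type u
  [addC : AddCommGroup C]
  [modC : Module R C]
  [addN : AddCommGroup N]
  [modN : Module R N]
  d : C →ₗ[R] C
  P : C →ₗ[R] N
  Z : Submodule R C
  d_d : ∀ c, d (d c) = 0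
  P_d : ∀ c, P (d c) = 0
  d_Z : ∀ z ∈ Z, d z = 0
  P_Z : ∀ n, ∃ z ∈ Z, P z = n
  Z_P : ∀ z ∈ Z, P z = 0 → ∃ c, d c = z

namespace TC
attribute [instance] TC.addC TC.modC TC.addN TC.modN

variable {R : Type u} [CommRing R]

/-- A module `M`, viewed as a complex concentrated in degree zero. -/
def base (M : Type u) [AddCommGroup M] [Module R M] : TC R where
  C := M
  N := M
  d := 0
  P := LinearMap.id
  Z := ⊤
  d_d := by simp
  P_d := by simp
  d_Z := by simp
  P_Z := by simp
  Z_P := by simp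

/-- The mapping cone of `C → C_x`, with top cohomology the cokernel of `N → N_x`. Requiring a
multiple `x ^ k • v` to come from `Z` singles out the elements `v` of the localization of `Z`. -/
noncomputable def step (x : R) (T : TC R) : TC R where
  C := T.C × Loc x T.C
  N := Loc x T.N ⧸ LinearMap.range (toLoc x T.N)
  d := (T.d ∘ₗ LinearMap.fst R _ _).prod
    (toLoc x T.C ∘ₗ LinearMap.fst R _ _ - locMap x T.d ∘ₗ LinearMap.snd R _ _)
  P := (LinearMap.range (toLoc x T.N)).mkQ ∘ₗ locMap x T.P ∘ₗ LinearMap.snd R _ _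
  Z :=
    { carrier := {c | c.1 = 0 ∧ ∃ (k : ℕ), ∃ z ∈ T.Z, x ^ k • c.2 = toLoc x T.C z}
      zero_mem' := ⟨rfl, 0, 0, T.Z.zero_mem, by simp⟩
      add_mem' := by
        rintro ⟨a, v⟩ ⟨b, w⟩ ⟨ha, k, z, hz, h⟩ ⟨hb, j, y, hy, h'⟩
        refine ⟨by simp_all, k + j, x ^ j • z + x ^ k • y,
          add_mem (T.Z.smul_mem _ hz) (T.Z.smul_mem _ hy), ?_⟩
        simp only [Prod.mk_add_mk, smul_add, map_add, map_smul] at *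
        rw [← h, ← h', smul_smul, smul_smul, ← pow_add, ← pow_add, add_comm j k]
      smul_mem' := by
        rintro r ⟨a, v⟩ ⟨ha, k, z, hz, h⟩
        refine ⟨by simp_all, k, r • z, T.Z.smul_mem _ hz, ?_⟩
        simp only [Prod.smul_mk, map_smul] at *
        rw [← h, smul_comm] }
  d_d := by
    rintro ⟨u, v⟩
    have : locMap x T.d (locMap x T.d v) = 0 := by
      obtain ⟨k, c, h⟩ := exists_toLoc x v
      apply loc_eq_zero (k := k)
      rw [← map_smul, ← map_smul, h, locMap_toLoc, locMap_toLoc, T.d_d, map_zero]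
    simp [T.d_d, this]
  P_d := by
    rintro ⟨u, v⟩
    have : locMap x T.P (locMap x T.d v) = 0 := by
      obtain ⟨k, c, h⟩ := exists_toLoc x v
      apply loc_eq_zero (k := k)
      rw [← map_smul, ← map_smul, h, locMap_toLoc, locMap_toLoc, T.P_d, map_zero]
    simp [this]
  d_Z := by
    rintro ⟨u, v⟩ ⟨hu, k, z, hz, h⟩
    have : locMap x T.d v = 0 := by
      apply loc_eq_zero (k := k)
      rw [← map_smul, h, locMap_toLoc, T.d_Z z hz, map_zero]
    simp only at hu
    simp [hu, this]
  P_Z := by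
    intro n
    obtain ⟨n, rfl⟩ := Submodule.mkQ_surjective _ n
    obtain ⟨k, m, h⟩ := exists_toLoc x n
    obtain ⟨z, hz, rfl⟩ := T.P_Z m
    refine ⟨(0, locDiv x k (toLoc x T.C z)), ⟨rfl, k, z, hz, by simp⟩, ?_⟩
    have : locMap x T.P (locDiv x k (toLoc x T.C z)) = n := by
      apply loc_cancel (k := k)
      rw [← map_smul, smul_locDiv, locMap_toLoc, h]
    simp [this]
  Z_P := by
    rintro ⟨u, v⟩ ⟨hu, k, z, hz, h⟩ hP
    simp only at hu h
    subst hu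
    have hP' : locMap x T.P v ∈ LinearMap.range (toLoc x T.N) := by
      simpa using hP
    obtain ⟨n, hn⟩ := hP'
    obtain ⟨z1, hz1, rfl⟩ := T.P_Z n
    have h0 : toLoc x T.N (T.P (z - x ^ k • z1)) = 0 := by
      rw [map_sub, map_sub, map_smul, map_smul, hn, ← map_smul, h, locMap_toLoc, sub_self]
    obtain ⟨j, hj⟩ := toLoc_eq_zero x h0
    rw [← map_smul] at hj
    obtain ⟨w, hw⟩ := T.Z_P _ (T.Z.smul_mem _ (sub_mem hz (T.Z.smul_mem _ hz1))) hj
    refine ⟨(z1, - locDiv x (j + k) (toLoc x T.C w)), ?_⟩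
    have : locMap x T.d (locDiv x (j + k) (toLoc x T.C w)) = v - toLoc x T.C z1 := by
      apply loc_cancel (k := j + k)
      rw [← map_smul, smul_locDiv, locMap_toLoc, hw, map_smul, map_sub, map_smul, ← h,
        ← smul_sub, smul_smul, pow_add]
    simp [T.d_Z z1 hz1, this]

lemma step_d (x : R) (T : TC R) (u : T.C) (v : Loc x T.C) :
    (step x T).d (u, v) = (T.d u, toLoc x T.C u - locMap x T.d v) := rfl

/-- The Čech complex of the module `M` with respect to the list `l`. -/
noncomputable def cech (M : Type u) [AddCommGroup M] [Module R M] (l : List R) : TC R :=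
  l.foldr step (base M)

/-- The total cohomology of `T`: cocycles modulo coboundaries, in all degrees at once. -/
abbrev H (T : TC R) : Type u :=
  LinearMap.ker T.d ⧸ (LinearMap.range T.d).submoduleOf (LinearMap.ker T.d)

end TC

/-! ### Properties of the Čech complex -/

namespace TC
variable {R : Type u} [CommRing R]

lemma cech_cons (M : Type u) [AddCommGroup M] [Module R M] (x : R) (l : List R) :
    cech M (x :: l) = step x (cech M l) := rfl

/-- The inductive step of `exists_symbols`: the new symbols are `e s m / x ^ s`. -/
lemma exists_symbols_step {M : Type u} [AddCommGroup M] [Module R M] (x : R) (l : List R)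
    (T : TC R) (ih : ∃ e : ℕ → M →ₗ[R] T.N,
      (∀ s m, e (s + 1) (l.prod • m) = e s m) ∧
      (∀ y ∈ l, ∀ s m, e s (y ^ s • m) = 0) ∧
      ∀ n, ∃ s m, e s m = n) :
    ∃ e : ℕ → M →ₗ[R] (Loc x T.N ⧸ LinearMap.range (toLoc x T.N)),
      (∀ s m, e (s + 1) ((x :: l).prod • m) = e s m) ∧
      (∀ y ∈ x :: l, ∀ s m, e s (y ^ s • m) = 0) ∧
      ∀ n, ∃ s m, e s m = n := by
  obtain ⟨e, h1, h2, h3⟩ := ih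
  have h1' : ∀ j s m, e (s + j) (l.prod ^ j • m) = e s m := by
    intro j
    induction j with
    | zero => intro s m; simp
    | succ j ih => intro s m; rw [← add_assoc, pow_succ', mul_smul, h1, ih]
  refine ⟨fun s => (LinearMap.range (toLoc x T.N)).mkQ ∘ₗ locDiv x s ∘ₗ
    toLoc x T.N ∘ₗ e s, ?_, ?_, ?_⟩
  · intro s m
    simp only [LinearMap.comp_apply]
    congr 1
    apply loc_cancel (k := s + 1)
    rw [smul_locDiv, pow_succ', mul_smul, smul_locDiv, List.prod_cons, mul_smul, map_smul, h1,
      map_smul]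
  · intro y hy s m
    simp only [LinearMap.comp_apply]
    rcases List.mem_cons.1 hy with rfl | hy
    · rw [map_smul, map_smul, locDiv_smul, Submodule.mkQ_apply, Submodule.Quotient.mk_eq_zero]
      exact ⟨_, rfl⟩
    · rw [h2 y hy, map_zero, map_zero, map_zero]
  · intro n
    obtain ⟨n, rfl⟩ := Submodule.mkQ_surjective _ n
    obtain ⟨k, ν, h⟩ := exists_toLoc x n
    obtain ⟨s, m, rfl⟩ := h3 ν
    refine ⟨s + k, x ^ s • l.prod ^ k • m, ?_⟩
    simp only [LinearMap.comp_apply]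
    congr 1
    apply loc_cancel (k := s + k)
    rw [smul_locDiv, map_smul, h1', map_smul, ← h, smul_smul, pow_add]

/-- The top cohomology consists of generalized fractions `e s m = [m / (∏ y ∈ l, y) ^ s]`, which
vanish when `m` is a multiple of some `y ^ s`. -/
lemma exists_symbols (M : Type u) [AddCommGroup M] [Module R M] (l : List R) :
    ∃ e : ℕ → M →ₗ[R] (cech M l).N,
      (∀ s m, e (s + 1) (l.prod • m) = e s m) ∧
      (∀ y ∈ l, ∀ s m, e s (y ^ s • m) = 0) ∧
      ∀ n, ∃ s m, e s m = n := by
  induction l with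
  | nil => exact ⟨fun _ => LinearMap.id, by intro s m; simp, by simp, fun n => ⟨0, n, rfl⟩⟩
  | cons x l ih =>
    exact exists_symbols_step x l _ ih

lemma N_torsion (M : Type u) [AddCommGroup M] [Module R M] (l : List R) (n : (cech M l).N) :
    ∃ s : ℕ, ∀ y ∈ l, y ^ s • n = 0 := by
  obtain ⟨e, -, h2, h3⟩ := exists_symbols M l
  obtain ⟨s, m, rfl⟩ := h3 n
  exact ⟨s, fun y hy => by rw [← map_smul, h2 y hy]⟩

lemma N_smul (M : Type u) [AddCommGroup M] [Module R M] (l : List R) (r : R)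
    (hr : ∀ m : M, r • m = 0) (n : (cech M l).N) : r • n = 0 := by
  obtain ⟨e, -, h2, h3⟩ := exists_symbols M l
  obtain ⟨s, m, rfl⟩ := h3 n
  rw [← map_smul, hr, map_zero]

lemma N_divisible (M : Type u) [AddCommGroup M] [Module R M] (l : List R) {y : R} (hy : y ∈ l)
    (n : (cech M l).N) : ∃ n', n = y • n' := by
  obtain ⟨e, h1, -, h3⟩ := exists_symbols M l
  obtain ⟨s, m, rfl⟩ := h3 n
  obtain ⟨r, hr⟩ := List.dvd_prod hy
  exact ⟨e (s + 1) (r • m), by rw [← h1 s m, hr, mul_smul, map_smul]⟩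

/-- If at every level `t` some power of the product of the `y ^ t` lies in the ideal that should
not contain it, every generalized fraction is zero. -/
lemma N_subsingleton (M : Type u) [AddCommGroup M] [Module R M] (l : List R)
    (h : ∀ t : ℕ, ∃ n : ℕ, l.prod ^ (t * n) ∈ Ideal.span {r | ∃ y ∈ l, r = y ^ (t * (n + 1))})
    (n : (cech M l).N) : n = 0 := by
  obtain ⟨e, h1, h2, h3⟩ := exists_symbols M l
  have h1' : ∀ j s m, e (s + j) (l.prod ^ j • m) = e s m := by
    intro j
    induction j with
    | zero => intro s m; simp
    | succ j ih => intro s m; rw [← add_assoc, pow_succ', mul_smul, h1, ih]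
  obtain ⟨t, m, rfl⟩ := h3 n
  obtain ⟨n, hn⟩ := h t
  rw [← h1' (t * n) t m]
  have : ∀ r ∈ Ideal.span {r | ∃ y ∈ l, r = y ^ (t * (n + 1))},
      e (t + t * n) (r • m) = 0 := by
    intro r hr
    induction hr using Submodule.span_induction with
    | mem r hr =>
      obtain ⟨y, hy, rfl⟩ := hr
      rw [show t + t * n = t * (n + 1) by ring, h2 y hy]
    | zero => simp
    | add r r' _ _ h h' => rw [add_smul, map_add, h, h', add_zero]
    | smul a r _ h => rw [smul_eq_mul, mul_smul, map_smul, h, smul_zero]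
  exact this _ hn

lemma N_map_surjective {M M' : Type u} [AddCommGroup M] [Module R M] [AddCommGroup M']
    [Module R M'] (f : M →ₗ[R] M') (hf : Function.Surjective f) (l : List R) :
    ∃ g : (cech M l).N →ₗ[R] (cech M' l).N, Function.Surjective g := by
  induction l with
  | nil => exact ⟨f, hf⟩
  | cons x l ih =>
    obtain ⟨g, hg⟩ := ih
    suffices ∃ g : (Loc x (cech M l).N ⧸ LinearMap.range (toLoc x (cech M l).N)) →ₗ[R]
      (Loc x (cech M' l).N ⧸ LinearMap.range (toLoc x (cech M' l).N)), Function.Surjective g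
      from this
    refine ⟨Submodule.mapQ (LinearMap.range (toLoc x (cech M l).N))
      (LinearMap.range (toLoc x (cech M' l).N)) (locMap x g) ?_, ?_⟩
    · rintro _ ⟨n, rfl⟩
      exact ⟨g n, by simp⟩
    · intro n
      obtain ⟨n, rfl⟩ := Submodule.mkQ_surjective _ n
      obtain ⟨m, rfl⟩ := locMap_surjective x hg n
      exact ⟨Submodule.mkQ _ m, by simp⟩

/-- Each member of `l` acts locally nilpotently on the cohomology of the Čech complex of `l`. -/
lemma cycle_torsion (M : Type u) [AddCommGroup M] [Module R M] (l : List R) {y : R}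
    (hy : y ∈ l) (z : (cech M l).C) (hz : (cech M l).d z = 0) :
    ∃ (k : ℕ) (w : (cech M l).C), y ^ k • z = (cech M l).d w := by
  induction l with
  | nil => simp at hy
  | cons x l ih =>
    set T := cech M l
    change ∃ (k : ℕ) (w : (step x T).C), y ^ k • z = (step x T).d w
    change (step x T).C at z
    obtain ⟨u, v⟩ := z
    have hz' : T.d u = 0 ∧ toLoc x T.C u - locMap x T.d v = 0 := Prod.mk_inj.1 hz
    obtain ⟨hu, hv⟩ := hz'
    rw [sub_eq_zero] at hv
    rcases List.mem_cons.1 hy with rfl | hy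
    · obtain ⟨n, c, hc⟩ := exists_toLoc y v
      have h0 : toLoc y T.C (y ^ n • u - T.d c) = 0 := by
        rw [map_sub, map_smul, hv, ← map_smul, hc, locMap_toLoc, sub_self]
      obtain ⟨m, hm⟩ := toLoc_eq_zero y h0
      refine ⟨m + n, (y ^ m • c, 0), ?_⟩
      rw [step_d]
      refine Prod.ext ?_ ?_
      · change y ^ (m + n) • u = T.d (y ^ m • c)
        rw [smul_sub, sub_eq_zero] at hm
        rw [pow_add, mul_smul, hm, map_smul]
      · change y ^ (m + n) • v = _
        dsimp only
        rw [pow_add, mul_smul, hc, map_smul, map_zero, sub_zero]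
    · obtain ⟨n, u', hn⟩ := ih hy u hu
      -- subtracting a boundary leaves a cycle of the form `(0, w)`
      set w := y ^ n • v - toLoc x T.C u' with hw
      have hdw : locMap x T.d w = 0 := by
        rw [hw, map_sub, map_smul, ← hv, locMap_toLoc, ← hn, map_smul, sub_self]
      obtain ⟨s, w', hs⟩ := exists_toLoc x w
      have h0 : toLoc x T.C (T.d w') = 0 := by
        rw [← locMap_toLoc, ← hs, map_smul, hdw, smul_zero]
      obtain ⟨k, hk⟩ := toLoc_eq_zero x h0
      rw [← map_smul] at hk
      obtain ⟨m, w'', hm⟩ := ih hy _ hk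
      refine ⟨m + n, (y ^ m • u', - locDiv x (k + s) (toLoc x T.C w'')), ?_⟩
      rw [step_d]
      refine Prod.ext ?_ ?_
      · change y ^ (m + n) • u = T.d (y ^ m • u')
        rw [pow_add, mul_smul, hn, map_smul]
      · change y ^ (m + n) • v = _
        have : locMap x T.d (locDiv x (k + s) (toLoc x T.C w'')) = y ^ m • w := by
          apply loc_cancel (k := k + s)
          rw [← map_smul, smul_locDiv, locMap_toLoc, ← hm, map_smul, map_smul, ← hs,
            pow_add, mul_smul, smul_comm (y ^ m), smul_comm (y ^ m)]
        dsimp only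
        rw [map_neg, this, hw, smul_sub, map_smul, pow_add, mul_smul]
        abel

/-- By exactness of localization, the sequence `0 → M → M → M' → 0` with first map multiplication
by `a` induces a short exact sequence of Čech complexes. -/
lemma exists_map_regular {M M' : Type u} [AddCommGroup M] [Module R M] [AddCommGroup M']
    [Module R M'] (f : M →ₗ[R] M') (hf : Function.Surjective f) (a : R)
    (ha : ∀ m : M, a • m = 0 → m = 0) (hk : ∀ m, f m = 0 ↔ ∃ m', m = a • m') (l : List R) :
    (∀ c : (cech M l).C, a • c = 0 → c = 0) ∧
    ∃ g : (cech M l).C →ₗ[R] (cech M' l).C, Function.Surjective g ∧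
      (∀ c, g ((cech M l).d c) = (cech M' l).d (g c)) ∧
      ∀ c, g c = 0 ↔ ∃ c', c = a • c' := by
  induction l with
  | nil => exact ⟨ha, f, hf, fun c => map_zero f, hk⟩
  | cons x l ih =>
    obtain ⟨hreg, g, hg, hd, hk⟩ := ih
    rw [cech_cons, cech_cons]
    generalize cech M l = T at *
    generalize cech M' l = T' at *
    have hregx : ∀ v : Loc x T.C, a • v = 0 → v = 0 := by
      intro v hv
      obtain ⟨k, c, hc⟩ := exists_toLoc x v
      have h0 : toLoc x T.C (a • c) = 0 := by rw [map_smul, ← hc, smul_comm, hv, smul_zero]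
      obtain ⟨j, hj⟩ := toLoc_eq_zero x h0
      rw [smul_comm] at hj
      apply loc_eq_zero (k := j + k)
      rw [pow_add, mul_smul, hc, ← map_smul, hreg _ hj, map_zero]
    have hgv : ∀ v, locMap x g (locMap x T.d v) = locMap x T'.d (locMap x g v) := by
      intro v
      obtain ⟨k, c, hc⟩ := exists_toLoc x v
      apply loc_cancel (k := k)
      simp only [← map_smul, hc, locMap_toLoc, hd]
    suffices (∀ c : T.C × Loc x T.C, a • c = 0 → c = 0) ∧
      ∃ g : (T.C × Loc x T.C) →ₗ[R] (T'.C × Loc x T'.C), Function.Surjective g ∧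
      (∀ c, g ((step x T).d c) = (step x T').d (g c)) ∧
      ∀ c, g c = 0 ↔ ∃ c', c = a • c' from this
    refine ⟨?_, g.prodMap (locMap x g), ?_, ?_, ?_⟩
    · rintro ⟨u, v⟩ h
      exact Prod.ext (hreg u (Prod.mk_inj.1 h).1) (hregx v (Prod.mk_inj.1 h).2)
    · exact Function.Surjective.prodMap hg (locMap_surjective x hg)
    · rintro ⟨u, v⟩
      change (g (T.d u), locMap x g (toLoc x T.C u - locMap x T.d v)) =
        (T'.d (g u), toLoc x T'.C (g u) - locMap x T'.d (locMap x g v))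
      rw [hd, map_sub, hgv, locMap_toLoc]
    · rintro ⟨u, v⟩
      change (g u, locMap x g v) = (0, 0) ↔ _
      rw [Prod.mk_inj]
      constructor
      · rintro ⟨hu, hv⟩
        obtain ⟨u', rfl⟩ := (hk u).1 hu
        obtain ⟨k, c, hc⟩ := exists_toLoc x v
        have h0 : toLoc x T'.C (g c) = 0 := by rw [← locMap_toLoc, ← hc, map_smul, hv, smul_zero]
        obtain ⟨j, hj⟩ := toLoc_eq_zero x h0
        rw [← map_smul] at hj
        obtain ⟨c', hc'⟩ := (hk _).1 hj
        refine ⟨(u', locDiv x (j + k) (toLoc x T.C c')), Prod.ext rfl ?_⟩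
        change v = a • _
        apply loc_cancel (k := j + k)
        rw [smul_comm _ a, smul_locDiv, ← map_smul, ← hc', map_smul, ← hc, pow_add, mul_smul]
      · rintro ⟨⟨u', v'⟩, h⟩
        obtain ⟨rfl, rfl⟩ := Prod.mk_inj.1 h
        have hz : ∀ c, a • g c = 0 := fun c => by rw [← map_smul]; exact (hk _).2 ⟨c, rfl⟩
        refine ⟨(hk _).2 ⟨u', rfl⟩, ?_⟩
        obtain ⟨k, c, hc⟩ := exists_toLoc x v'
        apply loc_eq_zero (k := k)
        rw [← map_smul, smul_comm, hc, map_smul, locMap_toLoc, ← map_smul, hz, map_zero]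

/-- If the kernel of `M → M'` is artinian and torsion with respect to all members of `l`, all its
localizations vanish, so the kernel on Čech complexes is just this artinian module. -/
lemma exists_map_torsion {M M' : Type u} [AddCommGroup M] [Module R M] [AddCommGroup M']
    [Module R M'] (f : M →ₗ[R] M') (hf : Function.Surjective f)
    [hA : IsArtinian R (LinearMap.ker f)] (l : List R)
    (ht : ∀ y ∈ l, ∀ m, f m = 0 → ∃ k : ℕ, y ^ k • m = 0) :
    ∃ g : (cech M l).C →ₗ[R] (cech M' l).C, Function.Surjective g ∧
      (∀ c, g ((cech M l).d c) = (cech M' l).d (g c)) ∧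
      IsArtinian R (LinearMap.ker g) ∧ ∀ y : R, (∀ m, f m = 0 → ∃ k : ℕ, y ^ k • m = 0) →
        ∀ c, g c = 0 → ∃ k : ℕ, y ^ k • c = 0 := by
  induction l with
  | nil => exact ⟨f, hf, fun c => map_zero f, hA, fun y h => h⟩
  | cons x l ih =>
    obtain ⟨g, hg, hd, hart, hk⟩ := ih fun y hy => ht y (List.mem_cons_of_mem _ hy)
    rw [cech_cons, cech_cons]
    generalize cech M l = T at *
    generalize cech M' l = T' at *
    have hgv : ∀ v, locMap x g (locMap x T.d v) = locMap x T'.d (locMap x g v) := by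
      intro v
      obtain ⟨k, c, hc⟩ := exists_toLoc x v
      apply loc_cancel (k := k)
      simp only [← map_smul, hc, locMap_toLoc, hd]
    have hinj : ∀ v, locMap x g v = 0 → v = 0 := by
      intro v hv
      obtain ⟨k, c, hc⟩ := exists_toLoc x v
      have h0 : toLoc x T'.C (g c) = 0 := by rw [← locMap_toLoc, ← hc, map_smul, hv, smul_zero]
      obtain ⟨j, hj⟩ := toLoc_eq_zero x h0
      rw [← map_smul] at hj
      obtain ⟨i, hi⟩ := hk x (ht x List.mem_cons_self) _ hj
      apply loc_eq_zero (k := i + (j + k))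
      rw [pow_add, pow_add, mul_smul, mul_smul, hc, ← map_smul, ← map_smul, hi, map_zero]
    suffices ∃ g : (T.C × Loc x T.C) →ₗ[R] (T'.C × Loc x T'.C), Function.Surjective g ∧
      (∀ c, g ((step x T).d c) = (step x T').d (g c)) ∧
      IsArtinian R (LinearMap.ker g) ∧ ∀ y : R, (∀ m, f m = 0 → ∃ k : ℕ, y ^ k • m = 0) →
        ∀ c, g c = 0 → ∃ k : ℕ, y ^ k • c = 0 from this
    refine ⟨g.prodMap (locMap x g), ?_, ?_, ?_, ?_⟩
    · exact Function.Surjective.prodMap hg (locMap_surjective x hg)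
    · rintro ⟨u, v⟩
      change (g (T.d u), locMap x g (toLoc x T.C u - locMap x T.d v)) =
        (T'.d (g u), toLoc x T'.C (g u) - locMap x T'.d (locMap x g v))
      rw [hd, map_sub, hgv, locMap_toLoc]
    · refine isArtinian_of_injective (P := LinearMap.ker g)
        ((LinearMap.fst R T.C (Loc x T.C)).restrict (p := LinearMap.ker (g.prodMap (locMap x g)))
          (q := LinearMap.ker g) ?_) ?_
      · rintro ⟨u, v⟩ h
        exact (Prod.mk_inj.1 h).1
      · rw [injective_iff_map_eq_zero]
        rintro ⟨⟨u, v⟩, h⟩ h'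
        have h1 : u = 0 := congrArg Subtype.val h'
        have h2 := hinj v (Prod.mk_inj.1 h).2
        subst h1 h2
        rfl
    · rintro y hy ⟨u, v⟩ h
      obtain ⟨k, hk⟩ := hk y hy u (Prod.mk_inj.1 h).1
      refine ⟨k, Prod.ext hk ?_⟩
      change y ^ k • v = 0
      rw [hinj v (Prod.mk_inj.1 h).2, smul_zero]

end TC

/-! ### Artinian modules -/

section Artinian
variable {R : Type u} [CommRing R] {A : Type u} [AddCommGroup A] [Module R A]

/-- A module all of whose elements are killed by powers of `a` is artinian as soon as the
submodule killed by `a` is (Melkersson). For a descending chain `M i`, the submodules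
`a ^ n (0 :_{M i} a ^ (n + 1))` of `0 :_A a` descend in both `n` and `i`. -/
lemma isArtinian_of_torsion (a : R) (hA : ∀ m : A, ∃ k : ℕ, a ^ k • m = 0)
    (K : Submodule R A) (hK : ∀ m, a • m = 0 → m ∈ K) [IsArtinian R K] : IsArtinian R A := by
  rw [← monotone_stabilizes_iff_artinian]
  intro M
  have hM : ∀ i j, i ≤ j → ∀ m : A, m ∈ OrderDual.ofDual (M j) → m ∈ OrderDual.ofDual (M i) :=
    fun i j h m hm => M.monotone h hm
  let L : ℕ → ℕ → Submodule R K := fun n i =>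
    { carrier := {v | ∃ w ∈ OrderDual.ofDual (M i), a ^ (n + 1) • w = 0 ∧ a ^ n • w = v}
      zero_mem' := ⟨0, Submodule.zero_mem _, by simp, by simp⟩
      add_mem' := by
        rintro _ _ ⟨w, hw, h, h'⟩ ⟨y, hy, k, k'⟩
        exact ⟨w + y, Submodule.add_mem _ hw hy, by rw [smul_add, h, k, add_zero],
          by rw [smul_add, h', k']; rfl⟩
      smul_mem' := by
        rintro r _ ⟨w, hw, h, h'⟩
        exact ⟨r • w, Submodule.smul_mem _ _ hw, by rw [smul_comm, h, smul_zero],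
          by rw [smul_comm, h']; rfl⟩ }
  have hL : ∀ n n' i i', n ≤ n' → i ≤ i' → L n' i' ≤ L n i := by
    rintro n n' i i' hn hi v ⟨w, hw, h, h'⟩
    refine ⟨a ^ (n' - n) • w, Submodule.smul_mem _ _ (hM _ _ hi _ hw), ?_, ?_⟩
    · rw [smul_smul, ← pow_add, show n + 1 + (n' - n) = n' + 1 by omega, h]
    · rw [smul_smul, ← pow_add, show n + (n' - n) = n' by omega, h']
  obtain ⟨k0, hk0⟩ := IsArtinian.monotone_stabilizes
    (⟨fun k => OrderDual.toDual (L k k), fun i j h => hL _ _ _ _ h h⟩ : ℕ →o (Submodule R K)ᵒᵈ)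
  have hrow : ∀ n, ∃ k, ∀ j, k ≤ j → L n k = L n j := fun n => IsArtinian.monotone_stabilizes
    (⟨fun i => OrderDual.toDual (L n i), fun i j h => hL _ _ _ _ le_rfl h⟩ :
      ℕ →o (Submodule R K)ᵒᵈ)
  choose r hr using hrow
  let i0 := k0 + ∑ n ∈ Finset.range k0, r n
  have hi0 : ∀ n i, i0 ≤ i → L n i0 ≤ L n i := by
    intro n i hi
    by_cases hn : n < k0
    · have : r n ≤ i0 := (Finset.single_le_sum (f := r) (fun _ _ => Nat.zero_le _)
        (Finset.mem_range.2 hn)).trans (Nat.le_add_left _ _)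
      rw [← hr n i0 this, ← hr n i (this.trans hi)]
    · calc L n i0 ≤ L k0 k0 := hL _ _ _ _ (by omega) (by omega)
        _ = L (n + i) (n + i) := hk0 (n + i) (by omega)
        _ ≤ L n i := hL _ _ _ _ (by omega) (by omega)
  refine ⟨i0, fun i hi => le_antisymm (M.monotone hi) ?_⟩
  have key : ∀ n, ∀ w ∈ OrderDual.ofDual (M i0), a ^ n • w = 0 → w ∈ OrderDual.ofDual (M i) := by
    intro n
    induction n with
    | zero =>
      intro w _ h
      rw [pow_zero, one_smul] at h
      exact h ▸ Submodule.zero_mem _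
    | succ n ih =>
      intro w hw h
      have hv : a ^ n • w ∈ K := hK _ (by rw [smul_smul, ← pow_succ', h])
      obtain ⟨w', hw', -, h'⟩ := hi0 n i hi
        (show (⟨a ^ n • w, hv⟩ : K) ∈ L n i0 from ⟨w, hw, h, rfl⟩)
      rw [← sub_add_cancel w w']
      refine Submodule.add_mem _ (ih _ (Submodule.sub_mem _ hw (hM _ _ hi _ hw')) ?_) hw'
      rw [smul_sub, h', sub_self]
  intro w hw
  obtain ⟨n, hn⟩ := hA w
  exact key n w hw hn

/-- The set `F` plays the role of the attached primes of `A` not containing `x`. If every `r` acts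
on `A` surjectively or nilpotently, the elements acting nilpotently form the only attached prime;
otherwise `A` is a sum of two proper submodules, by Fitting's lemma. -/
lemma exists_attached [IsArtinian R A] (x : R) :
    ∃ F : Set (Ideal R), F.Finite ∧ (∀ p ∈ F, p.IsPrime ∧ x ∉ p) ∧
      ∀ a, (∀ p ∈ F, a ∉ p) → ∃ j : ℕ, ∀ m : A, ∃ m' : A, x ^ j • m = a • m' := by
  suffices ∀ B : Submodule R A, ∃ F : Set (Ideal R), F.Finite ∧ (∀ p ∈ F, p.IsPrime ∧ x ∉ p) ∧
      ∀ a, (∀ p ∈ F, a ∉ p) → ∃ j : ℕ, ∀ m ∈ B, ∃ m' ∈ B, x ^ j • m = a • m' by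
    obtain ⟨F, h1, h2, h3⟩ := this ⊤
    refine ⟨F, h1, h2, fun a ha => ?_⟩
    obtain ⟨j, hj⟩ := h3 a ha
    refine ⟨j, fun m => ?_⟩
    obtain ⟨m', -, h⟩ := hj m trivial
    exact ⟨m', h⟩
  intro B
  induction B using IsWellFounded.induction (· < · : Submodule R A → Submodule R A → Prop) with
  | ind B ih =>
  by_cases hB : ∀ r : R, (∀ m ∈ B, ∃ m' ∈ B, m = r • m') ∨ ∃ k : ℕ, ∀ m ∈ B, r ^ k • m = 0
  · by_cases hx : ∃ k : ℕ, ∀ m ∈ B, x ^ k • m = 0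
    · obtain ⟨k, hk⟩ := hx
      exact ⟨∅, Set.finite_empty, by simp, fun a _ => ⟨k, fun m hm =>
        ⟨0, B.zero_mem, by rw [hk m hm, smul_zero]⟩⟩⟩
    · let p : Ideal R :=
        { carrier := {r | ∃ k : ℕ, ∀ m ∈ B, r ^ k • m = 0}
          zero_mem' := ⟨1, by simp⟩
          add_mem' := by
            rintro r s ⟨k, hk⟩ ⟨j, hj⟩
            refine ⟨k + j, fun m hm => ?_⟩
            rw [(Commute.all r s).add_pow', Finset.sum_smul]
            refine Finset.sum_eq_zero fun q hq => ?_
            rw [Finset.HasAntidiagonal.mem_antidiagonal] at hq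
            rw [nsmul_eq_mul, mul_smul]
            have : (r ^ q.1 * s ^ q.2) • m = 0 := by
              by_cases h : k ≤ q.1
              · rw [mul_comm, mul_smul, ← Nat.sub_add_cancel h, pow_add, mul_smul, hk m hm]
                simp
              · rw [mul_smul, ← Nat.sub_add_cancel (show j ≤ q.2 by omega), pow_add, mul_smul,
                  hj m hm]
                simp
            rw [this, smul_zero]
          smul_mem' := by
            rintro r s ⟨k, hk⟩
            refine ⟨k, fun m hm => ?_⟩
            rw [smul_eq_mul, mul_pow, mul_smul, hk m hm, smul_zero] }
      have hsurj : ∀ r ∉ p, ∀ m ∈ B, ∃ m' ∈ B, m = r • m' := fun r hr =>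
        (hB r).resolve_right hr
      refine ⟨{p}, Set.finite_singleton p, ?_, ?_⟩
      · rintro _ rfl
        refine ⟨⟨?_, ?_⟩, hx⟩
        · intro h
          exact hx (p.eq_top_iff_one.1 h |>.imp fun k hk m hm => by
            have := hk m hm
            rw [one_pow, one_smul] at this
            rw [this, smul_zero])
        · rintro r s ⟨k, hk⟩
          by_contra! h
          have hpow : ∀ j : ℕ, ∀ m ∈ B, ∃ m' ∈ B, m = (r * s) ^ j • m' := by
            intro j
            induction j with
            | zero => intro m hm; exact ⟨m, hm, by simp⟩
            | succ j ih' =>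
              intro m hm
              obtain ⟨m1, hm1, rfl⟩ := ih' m hm
              obtain ⟨m2, hm2, rfl⟩ := hsurj r h.1 m1 hm1
              obtain ⟨m3, hm3, rfl⟩ := hsurj s h.2 m2 hm2
              exact ⟨m3, hm3, by simp only [smul_smul]; ring_nf⟩
          refine hx ⟨0, fun m hm => ?_⟩
          obtain ⟨m', hm', rfl⟩ := hpow k m hm
          rw [hk m' hm', smul_zero]
      · intro a ha
        refine ⟨0, fun m hm => ?_⟩
        obtain ⟨m', hm', h⟩ := hsurj a (ha p rfl) m hm
        exact ⟨m', hm', by rw [pow_zero, one_smul, h]⟩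
  · push Not at hB
    obtain ⟨r, ⟨b, hb, hb'⟩, hr⟩ := hB
    -- Fitting's lemma: `B = r ^ n B + ker r ^ n` for large `n`
    let I : ℕ → Submodule R A := fun n => B.map (LinearMap.lsmul R A (r ^ n))
    have hI : ∀ n v, v ∈ I n ↔ ∃ w ∈ B, r ^ n • w = v := fun n v => Iff.rfl
    have hIle : ∀ n m, n ≤ m → I m ≤ I n := by
      rintro n m h v ⟨w, hw, rfl⟩
      refine ⟨r ^ (m - n) • w, B.smul_mem _ hw, ?_⟩
      simp only [LinearMap.lsmul_apply]
      rw [smul_smul, ← pow_add, show n + (m - n) = m by omega]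
    obtain ⟨n, hn⟩ := IsArtinian.monotone_stabilizes
      (⟨fun k => OrderDual.toDual (I k), fun i j h => hIle i j h⟩ : ℕ →o (Submodule R A)ᵒᵈ)
    let B1 := I (n + 1)
    let B2 := B ⊓ LinearMap.ker (LinearMap.lsmul R A (r ^ (n + 1)))
    have h1 : B1 < B := by
      refine lt_of_le_of_ne ?_ ?_
      · rintro _ ⟨w, hw, rfl⟩
        exact B.smul_mem _ hw
      · intro h
        obtain ⟨w, hw, h'⟩ := h.ge hb
        refine hb' (r ^ n • w) (B.smul_mem _ hw) ?_
        rw [smul_smul, ← pow_succ', ← h']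
        rfl
    have h2 : B2 < B := by
      refine lt_of_le_of_ne inf_le_left fun h => ?_
      obtain ⟨m, hm, h'⟩ := hr (n + 1)
      exact h' (h.ge hm).2
    have h12 : ∀ m ∈ B, ∃ u ∈ B1, ∃ v ∈ B2, m = u + v := by
      intro m hm
      have e : I (n + 1) = I (n + 1 + (n + 1)) :=
        (hn (n + 1) (by omega)).symm.trans (hn (n + 1 + (n + 1)) (by omega))
      have : r ^ (n + 1) • m ∈ I (n + 1) := ⟨m, hm, rfl⟩
      rw [e] at this
      obtain ⟨w, hw, h'⟩ := this
      have h' : r ^ (n + 1 + (n + 1)) • w = r ^ (n + 1) • m := h'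
      refine ⟨r ^ (n + 1) • w, ⟨w, hw, rfl⟩, m - r ^ (n + 1) • w,
        ⟨B.sub_mem hm (B.smul_mem _ hw), ?_⟩, by abel⟩
      change r ^ (n + 1) • (m - r ^ (n + 1) • w) = 0
      rw [smul_sub, smul_smul, ← pow_add, h', sub_self]
    obtain ⟨F1, f1, p1, a1⟩ := ih B1 h1
    obtain ⟨F2, f2, p2, a2⟩ := ih B2 h2
    refine ⟨F1 ∪ F2, f1.union f2, ?_, ?_⟩
    · rintro p (hp | hp)
      exacts [p1 p hp, p2 p hp]
    · intro a ha
      obtain ⟨j1, e1⟩ := a1 a fun p hp => ha p (Or.inl hp)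
      obtain ⟨j2, e2⟩ := a2 a fun p hp => ha p (Or.inr hp)
      refine ⟨j1 + j2, fun m hm => ?_⟩
      obtain ⟨u, hu, v, hv, rfl⟩ := h12 m hm
      obtain ⟨u', hu', hu2⟩ := e1 u hu
      obtain ⟨v', hv', hv2⟩ := e2 v hv
      refine ⟨x ^ j2 • u' + x ^ j1 • v', B.add_mem (B.smul_mem _ (h1.le hu'))
        (B.smul_mem _ (h2.le hv')), ?_⟩
      rw [smul_add, smul_add, smul_comm a, smul_comm a, ← hu2, ← hv2, smul_smul, smul_smul,
        ← pow_add, ← pow_add, add_comm j2 j1]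

end Artinian

/-! ### Artinian cohomology -/

section
variable {R : Type u} [CommRing R]

lemma isArtinian_range_of_ker_le {W A A' : Type*} [AddCommGroup W] [Module R W]
    [AddCommGroup A] [Module R A] [AddCommGroup A'] [Module R A'] (φ : W →ₗ[R] A)
    (ψ : W →ₗ[R] A') (h : LinearMap.ker ψ ≤ LinearMap.ker φ) [IsArtinian R A'] :
    IsArtinian R (LinearMap.range φ) := by
  have : IsArtinian R (W ⧸ LinearMap.ker ψ) :=
    isArtinian_of_injective ((LinearMap.ker ψ).liftQ ψ le_rfl) (by
      rw [← LinearMap.ker_eq_bot]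
      exact Submodule.ker_liftQ_eq_bot _ _ _ le_rfl)
  rw [← Submodule.range_liftQ (LinearMap.ker ψ) φ h]
  infer_instance

end

namespace TC
variable {R : Type u} [CommRing R]

/-- The projection from cycles to homology. -/
noncomputable def hmk (T : TC R) : LinearMap.ker T.d →ₗ[R] H T := Submodule.mkQ _

lemma hmk_surjective (T : TC R) : Function.Surjective (hmk T) := Submodule.mkQ_surjective _

lemma hmk_eq_zero (T : TC R) (z : LinearMap.ker T.d) : hmk T z = 0 ↔ ∃ w, T.d w = z := by
  rw [hmk, Submodule.mkQ_apply, Submodule.Quotient.mk_eq_zero]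
  rfl

/-- The part of `H T` killed by `a` is the image of the connecting map: it is a quotient of a
submodule of `H T'`, hence artinian, and Melkersson's criterion applies. -/
lemma isArtinian_H_of_regular {T T' : TC R} (g : T.C →ₗ[R] T'.C) (hg : Function.Surjective g)
    (hd : ∀ c, g (T.d c) = T'.d (g c)) (a : R) (hreg : ∀ c : T.C, a • c = 0 → c = 0)
    (hk : ∀ c, g c = 0 ↔ ∃ c', c = a • c')
    (ht : ∀ z, T.d z = 0 → ∃ (k : ℕ) (w : T.C), a ^ k • z = T.d w)
    [IsArtinian R (H T')] : IsArtinian R (H T) := by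
  have hga : ∀ c, g (a • c) = 0 := fun c => (hk _).2 ⟨c, rfl⟩
  -- pairs `(w, z)` with `d w = a z`
  let W : Submodule R (T.C × T.C) :=
    LinearMap.ker (T.d ∘ₗ LinearMap.fst R _ _ - a • LinearMap.snd R T.C T.C)
  have hW : ∀ p : W, T.d p.1.1 = a • p.1.2 := fun p => sub_eq_zero.1 p.2
  let φ : W →ₗ[R] H T := hmk T ∘ₗ
    (LinearMap.snd R T.C T.C ∘ₗ W.subtype).codRestrict (LinearMap.ker T.d) (fun p => hreg _ (by
      change a • T.d p.1.2 = 0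
      rw [← map_smul, ← hW, T.d_d]))
  let ψ : W →ₗ[R] H T' := hmk T' ∘ₗ
    (g ∘ₗ LinearMap.fst R T.C T.C ∘ₗ W.subtype).codRestrict (LinearMap.ker T'.d) (fun p => by
      change T'.d (g p.1.1) = 0
      rw [← hd, hW, hga])
  have hle : LinearMap.ker ψ ≤ LinearMap.ker φ := by
    intro p hp
    obtain ⟨w', hw'⟩ := (hmk_eq_zero _ _).1 hp
    obtain ⟨w, rfl⟩ := hg w'
    have hw' : T'.d (g w) = g p.1.1 := hw'
    obtain ⟨b, hb⟩ := (hk (p.1.1 - T.d w)).1 (by rw [map_sub, hd, hw', sub_self])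
    refine (hmk_eq_zero _ _).2 ⟨b, ?_⟩
    change T.d b = p.1.2
    rw [← sub_eq_zero]
    apply hreg
    rw [smul_sub, ← map_smul, ← hb, map_sub, T.d_d, hW, sub_zero, sub_self]
  have := isArtinian_range_of_ker_le φ ψ hle
  refine isArtinian_of_torsion a ?_ (LinearMap.range φ) ?_
  · intro m
    obtain ⟨z, rfl⟩ := hmk_surjective T m
    obtain ⟨k, w, h⟩ := ht z z.2
    exact ⟨k, by rw [← map_smul]; exact (hmk_eq_zero _ _).2 ⟨w, h.symm⟩⟩
  · intro m hm
    obtain ⟨z, rfl⟩ := hmk_surjective T m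
    rw [← map_smul] at hm
    obtain ⟨w, hw⟩ := (hmk_eq_zero _ _).1 hm
    exact ⟨⟨(w, z), sub_eq_zero.2 hw⟩, rfl⟩

lemma isArtinian_H_of_ker {T T' : TC R} (g : T.C →ₗ[R] T'.C) (hg : Function.Surjective g)
    (hd : ∀ c, g (T.d c) = T'.d (g c)) [IsArtinian R (LinearMap.ker g)]
    [IsArtinian R (H T')] : IsArtinian R (H T) := by
  let φ : H T →ₗ[R] H T' := Submodule.mapQ _ _ (g.restrict (p := LinearMap.ker T.d)
    (q := LinearMap.ker T'.d) (fun z hz => by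
      change T'.d (g z) = 0
      rw [← hd, LinearMap.mem_ker.1 hz, map_zero])) (by
      rintro ⟨z, hz⟩ ⟨w, hw⟩
      exact ⟨g w, by rw [← hd, hw]; rfl⟩)
  have : IsArtinian R (LinearMap.ker g ⊓ LinearMap.ker T.d : Submodule R T.C) :=
    isArtinian_of_le inf_le_left
  let f : (LinearMap.ker g ⊓ LinearMap.ker T.d : Submodule R T.C) →ₗ[R] H T :=
    hmk T ∘ₗ Submodule.inclusion inf_le_right
  refine isArtinian_of_range_eq_ker f φ (le_antisymm ?_ ?_)
  · rintro _ ⟨z, rfl⟩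
    exact (hmk_eq_zero _ _).2 ⟨0, by rw [map_zero]; exact z.2.1.symm⟩
  · intro m hm
    obtain ⟨z, rfl⟩ := hmk_surjective T m
    obtain ⟨w', hw'⟩ := (hmk_eq_zero T' _).1 (show hmk T' _ = 0 from hm)
    obtain ⟨w, rfl⟩ := hg w'
    have hw' : T'.d (g w) = g z := hw'
    have hz : T.d z = 0 := z.2
    refine ⟨⟨z - T.d w, ?_, ?_⟩, ?_⟩
    · change g (z - T.d w) = 0
      rw [map_sub, hd, hw', sub_self]
    · change T.d (z - T.d w) = 0
      rw [map_sub, hz, T.d_d, sub_self]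
    · rw [← sub_eq_zero]
      change hmk T _ - hmk T _ = 0
      rw [← map_sub]
      refine (hmk_eq_zero _ _).2 ⟨-w, ?_⟩
      rw [map_neg]
      change - T.d w = (z - T.d w) - z
      abel

/-- The `x`-power torsion of the top cohomology is a quotient of the cohomology of the cone: if
`z` represents `n` and `x ^ k • z = d w`, then `(z, w / x ^ k)` is a cocycle of the cone. -/
lemma isArtinian_torsion (T : TC R) (x : R) [IsArtinian R (H (step x T))]
    (Γ : Submodule R T.N) (hΓ : ∀ n ∈ Γ, ∃ k : ℕ, x ^ k • n = 0) : IsArtinian R Γ := by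
  let φ : LinearMap.ker (step x T).d →ₗ[R] T.N :=
    T.P ∘ₗ LinearMap.fst R T.C (Loc x T.C) ∘ₗ (LinearMap.ker (step x T).d).subtype
  have h : LinearMap.ker (hmk (step x T)) ≤ LinearMap.ker φ := by
    rintro ⟨⟨u, v⟩, hz⟩ h
    obtain ⟨⟨a, b⟩, hw⟩ := (hmk_eq_zero _ _).1 h
    have : T.d a = u := (Prod.mk_inj.1 hw).1
    change T.P u = 0
    rw [← this, T.P_d]
  have := isArtinian_range_of_ker_le φ _ h
  refine isArtinian_of_le (t := LinearMap.range φ) ?_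
  intro n hn
  obtain ⟨k, hk⟩ := hΓ n hn
  obtain ⟨z, hz, rfl⟩ := T.P_Z n
  rw [← map_smul] at hk
  obtain ⟨w, hw⟩ := T.Z_P _ (T.Z.smul_mem _ hz) hk
  refine ⟨⟨(z, locDiv x k (toLoc x T.C w)), ?_⟩, rfl⟩
  change (step x T).d _ = 0
  rw [step_d]
  refine Prod.ext (T.d_Z z hz) ?_
  change toLoc x T.C z - locMap x T.d _ = 0
  rw [sub_eq_zero]
  apply loc_cancel (k := k)
  rw [← map_smul, ← map_smul, smul_locDiv, locMap_toLoc, hw]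

end TC

section Ideals
variable {R : Type u} [CommRing R]

lemma factor_eq_zero (I : Ideal R) (a : R) (m : R ⧸ I) :
    Submodule.factor (le_sup_left : I ≤ I ⊔ Ideal.span {a}) m = 0 ↔
      ∃ r : R, m = r • (Submodule.Quotient.mk a : R ⧸ I) := by
  obtain ⟨s, rfl⟩ := Submodule.mkQ_surjective I m
  constructor
  · intro h
    have h : s ∈ I ⊔ Ideal.span {a} := (Submodule.Quotient.mk_eq_zero _).1 h
    obtain ⟨i, hi, j, hj, rfl⟩ := Submodule.mem_sup.1 h
    obtain ⟨r, rfl⟩ := Ideal.mem_span_singleton'.1 hj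
    refine ⟨r, (Submodule.Quotient.eq I).2 ?_⟩
    simpa using hi
  · rintro ⟨r, h⟩
    have h := (Submodule.Quotient.eq I).1 h
    refine (Submodule.Quotient.mk_eq_zero _).2 ?_
    rw [← sub_add_cancel s (r • a)]
    exact add_mem (Ideal.mem_sup_left h)
      (Ideal.mem_sup_right (Ideal.mem_span_singleton'.2 ⟨r, rfl⟩))

lemma factor_eq_zero' (I : Ideal R) (a : R) (m : R ⧸ I) :
    Submodule.factor (le_sup_left : I ≤ I ⊔ Ideal.span {a}) m = 0 ↔
      ∃ m' : R ⧸ I, m = a • m' := by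
  have h : ∀ r : R, r • (Submodule.Quotient.mk a : R ⧸ I) = a • Submodule.Quotient.mk r := by
    intro r
    rw [← Submodule.Quotient.mk_smul, ← Submodule.Quotient.mk_smul, smul_eq_mul, smul_eq_mul,
      mul_comm]
  rw [factor_eq_zero]
  constructor
  · rintro ⟨r, rfl⟩
    exact ⟨_, h r⟩
  · rintro ⟨m', rfl⟩
    obtain ⟨r, rfl⟩ := Submodule.mkQ_surjective I m'
    exact ⟨r, (h r).symm⟩

/-- The cohomology of the Čech complex of `R ⧸ I` for a list `l` in `m` is artinian if every prime
containing both `I` and `l` is equal to `m`. -/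
lemma isArtinian_H [IsNoetherianRing R] [IsLocalRing R] (l : List R)
    (hl : ∀ y ∈ l, y ∈ IsLocalRing.maximalIdeal R) (I : Ideal R)
    (hI : ∀ p : Ideal R, p.IsPrime → I ≤ p → (∀ y ∈ l, y ∈ p) → p = IsLocalRing.maximalIdeal R) :
    IsArtinian R (TC.H (TC.cech (R ⧸ I) l)) := by
  induction I using IsNoetherian.induction with | hgt I ih =>
  by_cases htop : I = ⊤
  · have hsub : Subsingleton (R ⧸ I) := Submodule.Quotient.subsingleton_iff.2 htop
    have h := (TC.exists_map_regular (LinearMap.id : (R ⧸ I) →ₗ[R] (R ⧸ I))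
      Function.surjective_id 0 (fun m _ => Subsingleton.elim _ _)
      (fun m => ⟨fun _ => ⟨0, Subsingleton.elim _ _⟩, fun _ => Subsingleton.elim _ _⟩) l).1
    have : Subsingleton (TC.cech (R ⧸ I) l).C :=
      ⟨fun a b => by rw [h a (zero_smul _ _), h b (zero_smul _ _)]⟩
    infer_instance
  by_cases hass : ∃ p ∈ associatedPrimes R (R ⧸ I), ∀ y ∈ l, y ∈ p
  · obtain ⟨p, hp, hlp⟩ := hass
    obtain ⟨hp1, c, hc⟩ := isAssociatedPrime_iff.1 hp
    have hcm : ∀ r, r ∈ p ↔ r • c = 0 := by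
      intro r
      rw [hc, Submodule.mem_colon_singleton, Submodule.mem_bot]
    have hpm : p = IsLocalRing.maximalIdeal R := by
      refine hI p hp1 (fun r hr => ?_) hlp
      rw [hcm]
      obtain ⟨s, rfl⟩ := Submodule.mkQ_surjective I c
      exact (Submodule.Quotient.mk_eq_zero _).2 (Ideal.mul_mem_right _ I hr)
    obtain ⟨c, rfl⟩ := Submodule.mkQ_surjective I c
    have hcI : c ∉ I := by
      intro h
      refine hp1.ne_top (p.eq_top_iff_one.2 ((hcm 1).2 ?_))
      rw [one_smul]
      exact (Submodule.Quotient.mk_eq_zero _).2 h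
    set J : Ideal R := I ⊔ Ideal.span {c} with hJ
    have hIJ : I < J := by
      refine lt_of_le_of_ne le_sup_left fun h => hcI ?_
      rw [h]
      exact Ideal.mem_sup_right (Ideal.mem_span_singleton_self c)
    have := ih J hIJ fun q hq hJq => hI q hq (hIJ.le.trans hJq)
    have hmp : ∀ r ∈ IsLocalRing.maximalIdeal R, ∀ m : R ⧸ I,
        Submodule.factor (le_sup_left : I ≤ I ⊔ Ideal.span {c}) m = 0 → r • m = 0 := by
      intro r hr m hm
      obtain ⟨s, rfl⟩ := (factor_eq_zero I c m).1 hm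
      rw [smul_comm]
      exact (congrArg (s • ·) ((hcm r).1 (hpm ▸ hr))).trans (smul_zero s)
    have hart : IsArtinian R
        (LinearMap.ker (Submodule.factor (le_sup_left : I ≤ I ⊔ Ideal.span {c}))) := by
      have h1 : IsArtinian R (R ⧸ IsLocalRing.maximalIdeal R) := by
        have : IsSimpleModule R (R ⧸ IsLocalRing.maximalIdeal R) :=
          isSimpleModule_iff_isCoatom.2 (IsLocalRing.maximalIdeal.isMaximal R).out
        infer_instance
      have h2 := isArtinian_range_of_ker_le
        (LinearMap.toSpanSingleton R (R ⧸ I) (Submodule.mkQ I c))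
        (Submodule.mkQ (IsLocalRing.maximalIdeal R)) (by
          rw [Submodule.ker_mkQ]
          intro r hr
          exact (hcm r).1 (hpm ▸ hr))
      refine isArtinian_of_le (t := LinearMap.range
        (LinearMap.toSpanSingleton R (R ⧸ I) (Submodule.mkQ I c))) ?_
      intro m hm
      obtain ⟨s, rfl⟩ := (factor_eq_zero I c m).1 hm
      exact ⟨s, rfl⟩
    obtain ⟨g, hg, hd, hk, -⟩ := TC.exists_map_torsion _ (Submodule.factor_surjective le_sup_left) l
      (fun y hy m hm => ⟨1, by rw [pow_one]; exact hmp y (hl y hy) m hm⟩)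
    exact TC.isArtinian_H_of_ker g hg hd
  · -- some `a` in the ideal generated by `l` is a nonzerodivisor on `R ⧸ I`
    obtain ⟨a, hal, ha⟩ : ∃ a ∈ Ideal.span {y | y ∈ l}, ∀ m : R ⧸ I, a • m = 0 → m = 0 := by
      by_contra! hcon
      refine hass ?_
      have hsub : (Ideal.span {y | y ∈ l} : Set R) ⊆
          ⋃ p ∈ associatedPrimes R (R ⧸ I), (id p : Ideal R) := by
        intro a hal
        simp only [id]
        rw [biUnion_associatedPrimes_eq_zero_divisors]
        obtain ⟨m, h, h'⟩ := hcon a hal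
        exact ⟨m, h', h⟩
      obtain ⟨p, hp, hle⟩ := (Ideal.subset_union_prime_finite
        (associatedPrimes.finite R (R ⧸ I)) (f := id) 0 0 fun _ h _ _ => h.isPrime).1 hsub
      exact ⟨p, hp, fun y hy => hle (Ideal.subset_span hy)⟩
    have haI : a ∉ I := by
      intro h
      refine htop ((Ideal.eq_top_iff_one I).2 ((Submodule.Quotient.mk_eq_zero I).1 (ha _ ?_)))
      rw [← Submodule.Quotient.mk_smul, smul_eq_mul, mul_one]
      exact (Submodule.Quotient.mk_eq_zero I).2 h
    set J : Ideal R := I ⊔ Ideal.span {a} with hJ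
    have hIJ : I < J := by
      refine lt_of_le_of_ne le_sup_left fun h => haI ?_
      rw [h]
      exact Ideal.mem_sup_right (Ideal.mem_span_singleton_self a)
    have := ih J hIJ fun q hq hJq => hI q hq (hIJ.le.trans hJq)
    obtain ⟨hreg, g, hg, hd, hk⟩ := TC.exists_map_regular _ (Submodule.factor_surjective le_sup_left) a ha
      (factor_eq_zero' I a) l
    refine TC.isArtinian_H_of_regular g hg hd a hreg hk ?_
    intro z hz
    -- the multipliers taking `z` to a boundary form an ideal
    let Q : Ideal R := (LinearMap.range (TC.cech (R ⧸ I) l).d).comap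
      (LinearMap.toSpanSingleton R _ z)
    have hQ : Ideal.span {y | y ∈ l} ≤ Q.radical := by
      rw [Ideal.span_le]
      intro y hy
      obtain ⟨k, w, h⟩ := TC.cycle_torsion (R ⧸ I) l hy z hz
      exact ⟨k, w, h.symm⟩
    obtain ⟨k, w, h⟩ := hQ hal
    exact ⟨k, w, h.symm⟩

end Ideals

/-! ### Non-vanishing of the top cohomology -/

section Nonvanishing
variable {R : Type u} [CommRing R]

/-- If the top cohomology for `x :: l` vanishes, the one for `l` is the sum of its `x`-power torsion
and its multiples of `a`, provided `x` is nilpotent modulo `I + (a) + (l)`. -/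
lemma exists_torsion_add (I : Ideal R) (l : List R) (x a : R)
    (hN : ∀ v : Loc x (TC.cech (R ⧸ I) l).N, ∃ n, toLoc x _ n = v)
    (hx : x ∈ (I ⊔ Ideal.span {a} ⊔ Ideal.span {y | y ∈ l}).radical)
    (η : (TC.cech (R ⧸ I) l).N) :
    ∃ γ ν : (TC.cech (R ⧸ I) l).N, η = γ + a • ν ∧ ∃ k : ℕ, x ^ k • γ = 0 := by
  obtain ⟨s, hs⟩ := TC.N_torsion (R ⧸ I) l η
  have hI : ∀ r ∈ I, ∀ n : (TC.cech (R ⧸ I) l).N, r • n = 0 := by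
    intro r hr
    refine TC.N_smul _ _ r fun m => ?_
    obtain ⟨t, rfl⟩ := Submodule.mkQ_surjective I m
    exact (Submodule.Quotient.mk_eq_zero I).2 (Ideal.mul_mem_right t I hr)
  generalize TC.cech (R ⧸ I) l = T at *
  obtain ⟨K, hK⟩ : ∃ K : ℕ,
      x ^ K ∈ I ⊔ Ideal.span {a} ⊔ Ideal.span {r | ∃ y ∈ l, r = y ^ s} := by
    have hle : I ⊔ Ideal.span {a} ⊔ Ideal.span {y | y ∈ l} ≤
        (I ⊔ Ideal.span {a} ⊔ Ideal.span {r | ∃ y ∈ l, r = y ^ s}).radical := by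
      refine sup_le (le_sup_left.trans Ideal.le_radical) (Ideal.span_le.2 fun y hy => ?_)
      exact ⟨s, Ideal.mem_sup_right (Ideal.subset_span ⟨y, hy, rfl⟩)⟩
    exact Ideal.radical_le_radical_iff.2 hle hx
  obtain ⟨ζ, hζ⟩ := hN (locDiv x K (toLoc x T.N η))
  have h0 : toLoc x T.N (η - x ^ K • ζ) = 0 := by
    rw [map_sub, map_smul, hζ, smul_locDiv, sub_self]
  obtain ⟨j, hj⟩ := toLoc_eq_zero x h0
  -- `Q` consists of the multipliers taking `ζ` into `a N` plus the `x`-power torsion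
  let Q : Ideal R :=
    { carrier := {r | ∃ γ ν : T.N, r • ζ = γ + a • ν ∧ ∃ k : ℕ, x ^ k • γ = 0}
      zero_mem' := ⟨0, 0, by simp, 0, by simp⟩
      add_mem' := by
        rintro r r' ⟨γ, ν, h, k, hk⟩ ⟨γ', ν', h', k', hk'⟩
        refine ⟨γ + γ', ν + ν', ?_, k + k', ?_⟩
        · rw [add_smul, h, h', smul_add]
          abel
        · rw [smul_add, pow_add, mul_smul, mul_smul, hk', smul_comm, hk, smul_zero, smul_zero,
            add_zero]
      smul_mem' := by
        rintro r r' ⟨γ, ν, h, k, hk⟩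
        refine ⟨r • γ, r • ν, ?_, k, ?_⟩
        · rw [smul_eq_mul, mul_smul, h, smul_add, smul_comm a]
        · rw [smul_comm, hk, smul_zero] }
  have hQ : I ⊔ Ideal.span {a} ⊔ Ideal.span {r | ∃ y ∈ l, r = y ^ s} ≤ Q := by
    refine sup_le (sup_le ?_ ?_) (Ideal.span_le.2 ?_)
    · intro r hr
      exact ⟨0, 0, by rw [hI r hr, smul_zero, add_zero], 0, by simp⟩
    · rw [Ideal.span_singleton_le_iff_mem]
      exact ⟨0, ζ, by rw [zero_add], 0, by simp⟩
    · rintro _ ⟨y, hy, rfl⟩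
      refine ⟨y ^ s • ζ, 0, by rw [smul_zero, add_zero], j + K, ?_⟩
      rw [smul_sub, smul_smul, ← pow_add, sub_eq_zero] at hj
      rw [smul_comm, ← hj, smul_comm, hs y hy, smul_zero]
  obtain ⟨γ, ν, h, k, hk⟩ := hQ hK
  refine ⟨η - x ^ K • ζ + γ, ν, ?_, j + k, ?_⟩
  · rw [add_assoc, ← h, sub_add_cancel]
  · rw [smul_add, pow_add, mul_smul, mul_smul, hk, smul_comm, hj, smul_zero, smul_zero, add_zero]

variable [IsNoetherianRing R] [IsLocalRing R]
open IsLocalRing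

/-- The top Čech cohomology of `R ⧸ I` for `l` is nonzero if `I + (l)` is `m`-primary and no list
shorter than `l` has this property. -/
lemma exists_N_ne_zero (l : List R) (hne : l ≠ []) (I : Ideal R)
    (hl : ∀ y ∈ l, y ∈ maximalIdeal R)
    (hI : maximalIdeal R ≤ (I ⊔ Ideal.span {y | y ∈ l}).radical)
    (hmin : ∀ l' : List R, (∀ y ∈ l', y ∈ maximalIdeal R) →
      maximalIdeal R ≤ (I ⊔ Ideal.span {y | y ∈ l'}).radical → l.length ≤ l'.length) :
    ∃ n : (TC.cech (R ⧸ I) l).N, n ≠ 0 := by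
  induction l generalizing I with
  | nil => exact absurd rfl hne
  | cons x l ih =>
  by_contra! hcon
  have hxm : x ∈ maximalIdeal R := hl x List.mem_cons_self
  have hcons : ∀ (J : Ideal R) (a : R) (l : List R),
      J ⊔ Ideal.span {y | y ∈ a :: l} = J ⊔ Ideal.span {a} ⊔ Ideal.span {y | y ∈ l} := by
    intro J a l
    rw [sup_assoc, ← Ideal.span_union]
    congr 2
    ext y
    simp
  have hN : ∀ v : Loc x (TC.cech (R ⧸ I) l).N, ∃ n, toLoc x _ n = v := by
    intro v
    have := hcon (Submodule.Quotient.mk v : Loc x (TC.cech (R ⧸ I) l).N ⧸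
      LinearMap.range (toLoc x (TC.cech (R ⧸ I) l).N))
    exact (Submodule.Quotient.mk_eq_zero _).1 this
  cases l with
  | nil =>
    obtain ⟨γ, ν, h, k, hk⟩ := exists_torsion_add I [] x x hN (hcons I x [] ▸ hI hxm)
      (Submodule.Quotient.mk 1 : R ⧸ I)
    obtain ⟨r, rfl⟩ := Submodule.mkQ_surjective I ν
    have hγ : γ = (Submodule.Quotient.mk (1 - x * r) : R ⧸ I) := eq_sub_of_add_eq h.symm
    subst hγ
    have hk' : x ^ k * (1 - x * r) ∈ I := (Submodule.Quotient.mk_eq_zero I).1 hk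
    have hu : IsUnit (1 - x * r) := by
      by_contra hu
      have h1 := Ideal.add_mem _ ((mem_maximalIdeal _).2 hu)
        (Ideal.mul_mem_right r _ hxm)
      rw [sub_add_cancel] at h1
      exact (Ideal.ne_top_iff_one _).1 (maximalIdeal.isMaximal R).ne_top h1
    have hxI : x ∈ I.radical := ⟨k, (Ideal.mul_unit_mem_iff_mem I hu).1 hk'⟩
    have := hmin [] (by simp) (by
      have h0 : Ideal.span {y | y ∈ ([] : List R)} = ⊥ := by simp
      rw [hcons, h0, sup_bot_eq] at hI
      rw [h0, sup_bot_eq]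
      refine hI.trans (Ideal.radical_le_radical_iff.2 (sup_le Ideal.le_radical ?_))
      rwa [Ideal.span_singleton_le_iff_mem])
    simp at this
  | cons y l =>
    have hym : y ∈ maximalIdeal R := hl y (by simp)
    have hart : IsArtinian R (TC.H (TC.step x (TC.cech (R ⧸ I) (y :: l)))) := by
      refine isArtinian_H (x :: y :: l) hl I fun p hp hIp hlp => ?_
      have : maximalIdeal R ≤ p := by
        refine hI.trans (hp.radical_le_iff.2 (sup_le hIp (Ideal.span_le.2 hlp)))
      exact ((maximalIdeal.isMaximal R).eq_of_le hp.ne_top this).symm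
    let Γ : Submodule R (TC.cech (R ⧸ I) (y :: l)).N :=
      { carrier := {γ | ∃ k : ℕ, x ^ k • γ = 0}
        zero_mem' := ⟨0, by simp⟩
        add_mem' := by
          rintro γ γ' ⟨k, hk⟩ ⟨k', hk'⟩
          exact ⟨k + k', by rw [smul_add, pow_add, mul_smul, mul_smul, hk', smul_comm, hk,
            smul_zero, smul_zero, add_zero]⟩
        smul_mem' := by
          rintro r γ ⟨k, hk⟩
          exact ⟨k, by rw [smul_comm, hk, smul_zero]⟩ }
    have hΓ : IsArtinian R Γ := TC.isArtinian_torsion _ x Γ fun _ h => h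
    obtain ⟨F, hF, hFp, hFa⟩ := exists_attached (A := Γ) y
    -- each prime of `F` contains at most one of the elements `x + y ^ (i + 1)`
    obtain ⟨a, ⟨i, rfl⟩, haF⟩ : ∃ a, (∃ i : ℕ, a = x + y ^ (i + 1)) ∧ ∀ p ∈ F, a ∉ p := by
      by_contra! h
      choose p hpF hp using fun i : ℕ => h (x + y ^ (i + 1)) ⟨i, rfl⟩
      have hinj : ∀ i j, i < j → p i ≠ p j := by
        intro i j hij he
        have h1 := (p i).sub_mem (hp i) (he ▸ hp j)
        rw [add_sub_add_left_eq_sub, show y ^ (i + 1) - y ^ (j + 1) =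
          y ^ (i + 1) * (1 - y ^ (j - i)) by
            rw [mul_sub, mul_one, ← pow_add, show i + 1 + (j - i) = j + 1 by omega]] at h1
        have hu : IsUnit (1 - y ^ (j - i)) := by
          by_contra hu
          have h1 := Ideal.add_mem _ ((mem_maximalIdeal _).2 hu)
            (Ideal.pow_mem_of_mem _ hym (j - i) (by omega))
          rw [sub_add_cancel] at h1
          exact (Ideal.ne_top_iff_one _).1 (maximalIdeal.isMaximal R).ne_top h1
        have h2 := (Ideal.mul_unit_mem_iff_mem (p i) hu).1 h1
        exact (hFp _ (hpF i)).2 ((hFp _ (hpF i)).1.mem_of_pow_mem _ h2)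
      have hinj' : Function.Injective p := by
        intro i j he
        rcases lt_trichotomy i j with h | h | h
        exacts [absurd he (hinj i j h), h, absurd he.symm (hinj j i h)]
      exact Set.infinite_of_injective_forall_mem hinj' hpF hF
    set a := x + y ^ (i + 1) with ha
    have ham : a ∈ maximalIdeal R :=
      Ideal.add_mem _ hxm (Ideal.pow_mem_of_mem _ hym _ (by omega))
    have hIa : maximalIdeal R ≤ (I ⊔ Ideal.span {a} ⊔ Ideal.span {z | z ∈ y :: l}).radical := by
      refine hI.trans (Ideal.radical_mono ?_)
      rw [hcons]
      refine sup_le (sup_le (le_sup_left.trans le_sup_left) ?_) le_sup_right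
      rw [Ideal.span_singleton_le_iff_mem, show x = a - y ^ i * y by rw [ha]; ring]
      exact Ideal.sub_mem _
        (Ideal.mem_sup_left (Ideal.mem_sup_right (Ideal.mem_span_singleton_self a)))
        (Ideal.mul_mem_left _ _ (Ideal.mem_sup_right (Ideal.subset_span (by simp))))
    obtain ⟨n, hn⟩ := ih (by simp) (I ⊔ Ideal.span {a})
      (fun z hz => hl z (List.mem_cons_of_mem _ hz)) hIa (by
        intro l' hl' hI'
        rw [← hcons] at hI'
        have := hmin (a :: l') (by simpa using ⟨ham, hl'⟩) hI'
        simpa using this)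
    refine hn ?_
    obtain ⟨j, hj⟩ := hFa a haF
    obtain ⟨g, hg⟩ := TC.N_map_surjective _
      (Submodule.factor_surjective (le_sup_left : I ≤ I ⊔ Ideal.span {a})) (y :: l)
    have hakill : ∀ n : (TC.cech (R ⧸ (I ⊔ Ideal.span {a})) (y :: l)).N, a • n = 0 := by
      refine TC.N_smul _ _ a fun m => ?_
      obtain ⟨t, rfl⟩ := Submodule.mkQ_surjective _ m
      exact (Submodule.Quotient.mk_eq_zero _).2 (Ideal.mul_mem_right t _
        (Ideal.mem_sup_right (Ideal.mem_span_singleton_self a)))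
    have hykill : ∀ n : (TC.cech (R ⧸ (I ⊔ Ideal.span {a})) (y :: l)).N, y ^ j • n = 0 := by
      intro n
      obtain ⟨η, rfl⟩ := hg n
      obtain ⟨γ, ν, rfl, hγ⟩ := exists_torsion_add I (y :: l) x a hN (hIa hxm) η
      obtain ⟨γ', hγ'⟩ := hj ⟨γ, hγ⟩
      have hγ' : y ^ j • γ = a • (γ' : (TC.cech (R ⧸ I) (y :: l)).N) := congrArg Subtype.val hγ'
      rw [← map_smul, smul_add, hγ', map_add, map_smul, map_smul, map_smul, hakill, hakill,
        smul_zero, add_zero]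
    have hdiv : ∀ k : ℕ, ∃ n', n = y ^ k • n' := by
      intro k
      induction k with
      | zero => exact ⟨n, by simp⟩
      | succ k ihk =>
        obtain ⟨n', h⟩ := ihk
        obtain ⟨n'', h'⟩ := TC.N_divisible (R ⧸ (I ⊔ Ideal.span {a})) (y :: l)
          (List.mem_cons_self : y ∈ y :: l) n'
        exact ⟨n'', by rw [h, h', smul_smul, pow_succ]⟩
    obtain ⟨n', h⟩ := hdiv j
    rw [h, hykill]

end Nonvanishing

/-! ### The system of parameters -/

/-- Let `(R, m)` be a commutative noetherian local ring of Krull dimension `d > 0`. Then there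
is a system of parameters `x 1, …, x d` of `R` (elements of `m` generating an ideal with
radical `m`) such that for all `n > 0`, `(x 1 * ⋯ * x d) ^ n` does not belong to the ideal
`(x 1 ^ (n+1), …, x d ^ (n+1))`. -/
theorem exists_sop_monomial {R : Type*} [CommRing R] [IsNoetherianRing R] [IsLocalRing R]
    (d : ℕ) (hd : 0 < d) (hdim : ringKrullDim R = d) :
    ∃ x : Fin d → R, (∀ i, x i ∈ IsLocalRing.maximalIdeal R) ∧
      (Ideal.span (Set.range x)).radical = IsLocalRing.maximalIdeal R ∧
      ∀ n : ℕ, 0 < n →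
        (∏ i, x i) ^ n ∉ Ideal.span (Set.range fun i => x i ^ (n + 1)) := by
  have hh : (IsLocalRing.maximalIdeal R).height = d := by
    rw [← IsLocalRing.maximalIdeal_height_eq_ringKrullDim] at hdim
    exact_mod_cast hdim
  -- being a minimal prime over an ideal of `m` amounts to that ideal being `m`-primary
  have hiff : ∀ I : Ideal R, I ≤ IsLocalRing.maximalIdeal R →
      (IsLocalRing.maximalIdeal R ∈ I.minimalPrimes ↔
        IsLocalRing.maximalIdeal R ≤ I.radical) := by
    intro I hI
    constructor
    · intro h
      rw [Ideal.radical_eq_sInf]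
      exact le_sInf fun p hp => h.2 ⟨hp.2, hp.1⟩ (IsLocalRing.le_maximalIdeal hp.2.ne_top)
    · intro h
      exact ⟨⟨(IsLocalRing.maximalIdeal.isMaximal R).isPrime, hI⟩,
        fun p hp _ => h.trans (hp.1.radical_le_iff.2 hp.2)⟩
  obtain ⟨s, hs, hcard⟩ :=
    Ideal.exists_finset_card_eq_height_of_isNoetherianRing (IsLocalRing.maximalIdeal R)
  have hcard : s.card = d := by
    rw [hh] at hcard
    exact_mod_cast hcard
  set l := s.toList with hl_def
  have hlen : l.length = d := by rw [hl_def, Finset.length_toList, hcard]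
  have hspan : Ideal.span {y | y ∈ l} = Ideal.span (s : Set R) := by
    congr 1
    ext y
    simp [hl_def]
  have hle : Ideal.span {y | y ∈ l} ≤ IsLocalRing.maximalIdeal R := hspan ▸ hs.1.2
  have hl : ∀ y ∈ l, y ∈ IsLocalRing.maximalIdeal R := fun y hy => hle (Ideal.subset_span hy)
  have hrad : IsLocalRing.maximalIdeal R ≤ (Ideal.span {y | y ∈ l}).radical :=
    (hiff _ hle).1 (hspan ▸ hs)
  obtain ⟨n0, hn0⟩ := exists_N_ne_zero l (by rintro h; simp [h] at hlen; omega) ⊥ hl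
    (by rwa [bot_sup_eq]) (by
      intro l' hl' h
      rw [bot_sup_eq] at h
      have hle' : Ideal.span {y | y ∈ l'} ≤ IsLocalRing.maximalIdeal R := Ideal.span_le.2 hl'
      classical
      have hset : {y | y ∈ l'} = (l'.toFinset : Set R) := by
        ext
        simp
      have h1 := Ideal.height_le_card_of_mem_minimalPrimes_span_finset
        (hset ▸ (hiff _ hle').2 h)
      rw [hh] at h1
      have h5 : d ≤ l'.toFinset.card := by exact_mod_cast h1
      rw [hlen]
      exact h5.trans (List.toFinset_card_le l'))
  -- some class is nonzero, so the monomial memberships fail uniformly for some exponent `t`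
  obtain ⟨t, ht⟩ : ∃ t : ℕ, ∀ n : ℕ,
      l.prod ^ (t * n) ∉ Ideal.span {r | ∃ y ∈ l, r = y ^ (t * (n + 1))} := by
    by_contra! h
    exact hn0 (TC.N_subsingleton _ l h n0)
  have ht0 : t ≠ 0 := by
    rintro rfl
    refine ht 0 (Ideal.subset_span ?_)
    exact ⟨l.get ⟨0, by omega⟩, List.get_mem _ _, by simp⟩
  clear_value l
  subst hlen
  refine ⟨fun i => l.get i ^ t, fun i => Ideal.pow_mem_of_mem _ (hl _ (List.get_mem _ _)) _
    (Nat.pos_of_ne_zero ht0), le_antisymm ?_ ?_, ?_⟩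
  · refine (IsLocalRing.maximalIdeal.isMaximal R).isPrime.radical_le_iff.2 (Ideal.span_le.2 ?_)
    rintro _ ⟨i, rfl⟩
    exact Ideal.pow_mem_of_mem _ (hl _ (List.get_mem _ _)) _ (Nat.pos_of_ne_zero ht0)
  · refine hrad.trans (Ideal.radical_le_radical_iff.2 (Ideal.span_le.2 fun y hy => ?_))
    obtain ⟨i, rfl⟩ := List.get_of_mem hy
    exact ⟨t, Ideal.subset_span ⟨i, rfl⟩⟩
  · intro n _ hmem
    refine ht n ?_
    have hprod : (∏ i, l.get i ^ t) ^ n = l.prod ^ (t * n) := by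
      rw [Finset.prod_pow, pow_mul]
      congr 2
      simp [Fin.prod_univ_getElem]
    rw [← hprod]
    refine Ideal.span_mono ?_ hmem
    rintro _ ⟨i, rfl⟩
    exact ⟨l.get i, List.get_mem _ _, by rw [pow_mul]⟩
end

section
/- Let R be a commutative noetherian ring of Krull dimension d > 0. Then i(R) ≥ d − 1; that is, if k ≥ 0 is an integer such that \overline{J}^n ⊆ J^{n−k} for every ideal J of R and every n ≥ k, then k ≥ d − 1. -/
/-- Krull's intersection theorem: every ideal of a noetherian local ring is closed. -/
lemma mem_of_forall_mem_sup_pow {A : Type*} [CommRing A] [IsNoetherianRing A] [IsLocalRing A]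
    (K : Ideal A) (b : A) (h : ∀ c : ℕ, b ∈ K ⊔ IsLocalRing.maximalIdeal A ^ c) : b ∈ K := by
  have key := Ideal.iInf_pow_smul_eq_bot_of_isLocalRing (M := A ⧸ K)
    (IsLocalRing.maximalIdeal A) (IsLocalRing.maximalIdeal.isMaximal A).ne_top
  have hb : (Ideal.Quotient.mk K b) ∈
      (⨅ i : ℕ, IsLocalRing.maximalIdeal A ^ i • ⊤ : Submodule A (A ⧸ K)) := by
    rw [Submodule.mem_iInf]
    intro c
    obtain ⟨y, hy, w, hw, rfl⟩ := Submodule.mem_sup.1 (h c)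
    have h2 : Ideal.Quotient.mk K (y + w) = w • (1 : A ⧸ K) := by
      rw [map_add, Ideal.Quotient.eq_zero_iff_mem.2 hy, zero_add, Algebra.smul_def, mul_one]
      rfl
    rw [h2]
    exact Submodule.smul_mem_smul hw trivial
  rw [key, Submodule.mem_bot] at hb
  exact Ideal.Quotient.eq_zero_iff_mem.1 hb

/-- The inductive step: if `b ∉ J` after localizing at a prime `Q`, and `Q < P` with
`x ∈ P \ Q`, then some `y` satisfies `b * y ^ t ∉ J + (y ^ (t + 1))` after localizing at `P`; the
proof finds such a `y` among the powers of `x`. -/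
lemma exists_pow_mul_notMem {R : Type*} [CommRing R] [IsNoetherianRing R] (t : ℕ)
    (Q P : Ideal R) [hQ : Q.IsPrime] [hP : P.IsPrime] (hQP : Q ≤ P) (x : R) (hxP : x ∈ P)
    (hxQ : x ∉ Q) (J : Ideal R) (b : R) (hb : ∀ s ∉ Q, s * b ∉ J) :
    ∃ y : R, ∀ s ∉ P, s * (b * y ^ t) ∉ J ⊔ Ideal.span {y ^ (t + 1)} := by
  by_contra! hcon
  -- the saturation `(J : x ^ ∞)`
  let K : Ideal R :=
    { carrier := {y | ∃ m : ℕ, x ^ m * y ∈ J}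
      zero_mem' := ⟨0, by simp⟩
      add_mem' := by
        rintro a a' ⟨m, hm⟩ ⟨m', hm'⟩
        refine ⟨m + m', ?_⟩
        have : x ^ (m + m') * (a + a') = x ^ m' * (x ^ m * a) + x ^ m * (x ^ m' * a') := by ring
        rw [this]
        exact J.add_mem (J.mul_mem_left _ hm) (J.mul_mem_left _ hm')
      smul_mem' := by
        rintro r a ⟨m, hm⟩
        refine ⟨m, ?_⟩
        have : x ^ m * (r • a) = r * (x ^ m * a) := by rw [smul_eq_mul]; ring
        rw [this]
        exact J.mul_mem_left _ hm }
  let A := Localization.AtPrime P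
  have hmem : algebraMap R A b ∈ K.map (algebraMap R A) := by
    have : IsNoetherianRing A := IsLocalization.isNoetherianRing P.primeCompl A inferInstance
    apply mem_of_forall_mem_sup_pow
    intro c
    obtain ⟨s, hs, hmem⟩ := hcon (x ^ c)
    obtain ⟨j, hj, w, hw, hjw⟩ := Submodule.mem_sup.1 hmem
    obtain ⟨r, rfl⟩ := Ideal.mem_span_singleton'.1 hw
    -- cancel `x ^ (c * t)` modulo the saturation
    have hK : s * b - r * x ^ c ∈ K := by
      refine ⟨c * t, ?_⟩
      have : x ^ (c * t) * (s * b - r * x ^ c) = j := by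
        have e : j = s * (b * (x ^ c) ^ t) - r * (x ^ c) ^ (t + 1) := by rw [← hjw]; ring
        rw [e, pow_mul]; ring
      rw [this]; exact hj
    have hx : algebraMap R A x ∈ IsLocalRing.maximalIdeal A := by
      rw [← Localization.AtPrime.map_eq_maximalIdeal]
      exact Ideal.mem_map_of_mem _ hxP
    have h1 : algebraMap R A s * algebraMap R A b ∈
        K.map (algebraMap R A) ⊔ IsLocalRing.maximalIdeal A ^ c := by
      have : algebraMap R A s * algebraMap R A b =
          algebraMap R A (s * b - r * x ^ c) + algebraMap R A r * algebraMap R A x ^ c := by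
        simp
      rw [this]
      exact Submodule.add_mem_sup (Ideal.mem_map_of_mem _ hK)
        (Ideal.mul_mem_left _ _ (Ideal.pow_mem_pow hx c))
    have hu : IsUnit (algebraMap R A s) :=
      IsLocalization.map_units A (⟨s, hs⟩ : P.primeCompl)
    exact (Ideal.unit_mul_mem_iff_mem _ hu).1 h1
  obtain ⟨s, hs, m, hm⟩ :=
    (IsLocalization.algebraMap_mem_map_algebraMap_iff P.primeCompl A K b).1 hmem
  refine hb (x ^ m * s) ?_ (by rw [mul_assoc]; exact hm)
  intro h
  rcases hQ.mem_or_mem h with h | h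
  · exact hxQ (hQ.mem_of_pow_mem m h)
  · exact hs (hQP h)

/-- A chain of primes of length `n` ending at `P` gives `z₁, …, zₙ` such that
`∏ zᵢ ^ t ∉ (z₁ ^ (t + 1), …, zₙ ^ (t + 1))`, even after localizing at `P`. -/
lemma exists_prod_pow_notMem {R : Type*} [CommRing R] [IsNoetherianRing R] (t : ℕ)
    (l : LTSeries (PrimeSpectrum R)) (n : ℕ) (hn : n < l.length + 1) :
    ∃ z : Fin n → R, ∀ s ∉ (l ⟨n, hn⟩).asIdeal,
      s * ∏ i, z i ^ t ∉ Ideal.span (Set.range fun i => z i ^ (t + 1)) := by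
  induction n with
  | zero =>
    refine ⟨Fin.elim0, fun s hs h => hs ?_⟩
    have : s = 0 := by simpa using h
    rw [this]; exact Ideal.zero_mem _
  | succ n ih =>
    obtain ⟨z, hz⟩ := ih (by omega)
    have hlt : l ⟨n, by omega⟩ < l ⟨n + 1, hn⟩ := l.strictMono (by simp [Fin.lt_def])
    have hlt' : (l ⟨n, by omega⟩).asIdeal < (l ⟨n + 1, hn⟩).asIdeal := hlt
    obtain ⟨x, hxP, hxQ⟩ := SetLike.exists_of_lt hlt'
    obtain ⟨y, hy⟩ := exists_pow_mul_notMem t _ _ hlt'.le x hxP hxQ _ _ hz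
    refine ⟨Fin.snoc z y, fun s hs h => hy s hs ?_⟩
    rw [Fin.prod_univ_castSucc] at h
    simp only [Fin.snoc_castSucc, Fin.snoc_last] at h
    refine (Ideal.span_le.2 ?_ :
      _ ≤ Ideal.span (Set.range fun i => z i ^ (t + 1)) ⊔ Ideal.span {y ^ (t + 1)}) h
    rintro _ ⟨i, rfl⟩
    refine Fin.lastCases ?_ (fun i => ?_) i
    · simp only [Fin.snoc_last]
      exact Ideal.mem_sup_right (Ideal.mem_span_singleton_self _)
    · simp only [Fin.snoc_castSucc]
      exact Ideal.mem_sup_left (Ideal.subset_span ⟨i, rfl⟩)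

lemma mem_intClosure_of_pow_mem {R : Type*} [CommRing R] (J : Ideal R) (x : R) (n : ℕ)
    (hn : 0 < n) (h : x ^ n ∈ J ^ n) : x ∈ Ideal.intClosure J := by
  refine Ideal.subset_span ⟨n, hn, fun i => if i = n then -x ^ n else 0, ?_, ?_⟩
  · intro i _ _
    dsimp only
    split_ifs with hi
    · rw [hi]; exact neg_mem h
    · exact Ideal.zero_mem _
  · rw [Finset.sum_eq_single_of_mem n (Finset.mem_Icc.2 ⟨hn, le_rfl⟩)]
    · simp
    · intro i _ hi
      simp [hi]

lemma le_of_intDimBound {R : Type*} [CommRing R] [IsNoetherianRing R]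
    (d : ℕ) (hd : 0 < d) (hdim : ringKrullDim R = d) (k : ℕ) (hk : IntDimBound R k) :
    d - 1 ≤ k := by
  by_contra! hlt
  obtain ⟨e, rfl⟩ : ∃ e, d = e + 1 := ⟨d - 1, by omega⟩
  simp only [Nat.add_sub_cancel] at hlt
  obtain ⟨l, hl⟩ := Order.le_krullDim_iff.1 (hdim.ge : ((e + 1 : ℕ) : WithBot ℕ∞) ≤ _)
  obtain ⟨z, hz⟩ := exists_prod_pow_notMem e l (e + 1) (by omega)
  set J := Ideal.span (Set.range fun i => z i ^ (e + 1)) with hJ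
  have hzJ : ∀ i, z i ^ (e + 1) ∈ J := fun i => Ideal.subset_span ⟨i, rfl⟩
  refine hz 1 ((Ideal.ne_top_iff_one _).1 (l _).isPrime.ne_top) ?_
  have hint : ∀ j : Fin e, z j.castSucc ^ e * z (Fin.last e) ∈ Ideal.intClosure J := by
    intro j
    refine mem_intClosure_of_pow_mem J _ (e + 1) (by omega) ?_
    have : (z j.castSucc ^ e * z (Fin.last e)) ^ (e + 1) =
        (z j.castSucc ^ (e + 1)) ^ e * z (Fin.last e) ^ (e + 1) := by ring
    rw [this, pow_succ J]
    exact Ideal.mul_mem_mul (Ideal.pow_mem_pow (hzJ _) e) (hzJ _)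
  have hprod : ∏ j : Fin e, (z j.castSucc ^ e * z (Fin.last e)) ∈ Ideal.intClosure J ^ e := by
    have := Ideal.prod_mem_prod (s := Finset.univ) (I := fun _ : Fin e => Ideal.intClosure J)
      (fun j _ => hint j)
    simpa using this
  have := Ideal.pow_le_self (by omega) (hk J e hlt.le hprod)
  rw [Finset.prod_mul_distrib, Finset.prod_const, Finset.card_univ, Fintype.card_fin] at this
  rwa [one_mul, Fin.prod_univ_castSucc]

/-- For a commutative noetherian ring `R` of Krull dimension `d > 0`, one has `i(R) ≥ d - 1`:
if `k ≥ 0` satisfies `\overline J ^ n ⊆ J ^ (n - k)` for every ideal `J` and every `n ≥ k`,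
then `k ≥ d - 1`. -/
theorem intDimBound_ge_dim_sub_one {R : Type*} [CommRing R] [IsNoetherianRing R]
    (d : ℕ) (hd : 0 < d) (hdim : ringKrullDim R = d) :
    (∀ k : ℕ, IntDimBound R k → d - 1 ≤ k) ∧
      ((d - 1 : ℕ) : ℕ∞) ≤ integralDimension R := by
  refine ⟨le_of_intDimBound d hd hdim, le_sInf ?_⟩
  rintro _ ⟨k, rfl, hk⟩
  exact Nat.cast_le.2 (le_of_intDimBound d hd hdim k hk)
end

section
/- Let R be a commutative noetherian ring. If i(R) < ∞, i.e. there exists an integer k ≥ 0 such that \overline{J}^n ⊆ J^{n−k} for every ideal J of R and every n ≥ k, then the Krull dimension of R is finite. -/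
/-- In a noetherian local ring, if `x ^ m * u ∈ A + (x ^ (2 m))` for all `m`, with `x` a nonunit,
then `u` lies in the saturation `A : x ^ ∞`. The saturation equals some `B = A : x ^ j`; cancelling
`x ^ m` gives `u ∈ B + (x ^ m)` for all `m`, and `B` is closed in the adic topology. -/
lemma exists_pow_mul_mem {S : Type*} [CommRing S] [IsNoetherianRing S] [IsLocalRing S]
    (A : Ideal S) (x u : S) (hx : x ∈ IsLocalRing.maximalIdeal S)
    (h : ∀ m : ℕ, x ^ m * u ∈ A ⊔ Ideal.span {(x ^ m) ^ 2}) : ∃ j : ℕ, x ^ j * u ∈ A := by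
  let B : Ideal S :=
    { carrier := {v | ∃ j : ℕ, x ^ j * v ∈ A}
      zero_mem' := ⟨0, by simp⟩
      add_mem' := by
        rintro a b ⟨i, hi⟩ ⟨j, hj⟩
        refine ⟨i + j, ?_⟩
        have e : x ^ (i + j) * (a + b) = x ^ j * (x ^ i * a) + x ^ i * (x ^ j * b) := by ring
        rw [e]
        exact A.add_mem (A.mul_mem_left _ hi) (A.mul_mem_left _ hj)
      smul_mem' := by
        rintro c a ⟨i, hi⟩
        refine ⟨i, ?_⟩
        have e : x ^ i * (c • a) = c * (x ^ i * a) := by rw [smul_eq_mul]; ring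
        rw [e]
        exact A.mul_mem_left _ hi }
  have hB : ∀ m : ℕ, u ∈ B ⊔ IsLocalRing.maximalIdeal S ^ m := by
    intro m
    obtain ⟨a, ha, b, hb, hab⟩ := Submodule.mem_sup.1 (h m)
    obtain ⟨r, rfl⟩ := Ideal.mem_span_singleton'.1 hb
    refine Submodule.mem_sup.2 ⟨u - r * x ^ m, ⟨m, ?_⟩, r * x ^ m, ?_, by ring⟩
    · have e : x ^ m * (u - r * x ^ m) = a := by linear_combination -hab
      rwa [e]
    · exact Ideal.mul_mem_left _ _ (Ideal.pow_mem_pow hx m)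
  have key : Ideal.Quotient.mk B u = 0 := by
    have h0 := Ideal.iInf_pow_smul_eq_bot_of_isLocalRing (M := S ⧸ B)
      (IsLocalRing.maximalIdeal S) (IsLocalRing.maximalIdeal.isMaximal S).ne_top
    rw [← Submodule.mem_bot S, ← h0, Submodule.mem_iInf]
    intro m
    obtain ⟨b, hb, c, hc, hbc⟩ := Submodule.mem_sup.1 (hB m)
    have e : Ideal.Quotient.mk B u = c • (1 : S ⧸ B) := by
      rw [← hbc, map_add, Ideal.Quotient.eq_zero_iff_mem.2 hb, zero_add, Algebra.smul_def, mul_one]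
      rfl
    rw [e]
    exact Submodule.smul_mem_smul hc trivial
  exact Ideal.Quotient.eq_zero_iff_mem.1 key

/-- The ideal generated by the squares of the members of a list. -/
def squaresIdeal {R : Type*} [CommRing R] (l : List R) : Ideal R :=
  Ideal.span {z | ∃ y ∈ l, z = y ^ 2}

lemma squaresIdeal_cons {R : Type*} [CommRing R] (y : R) (l : List R) :
    squaresIdeal (y :: l) = squaresIdeal l ⊔ Ideal.span {y ^ 2} := by
  rw [squaresIdeal, squaresIdeal, ← Ideal.span_union]
  congr 1
  ext z
  simp

/-- The length of a chain of primes is realised by a list whose product is not in the ideal of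
squares, even after localizing at the top prime `p` of the chain; the latter is expressed by
allowing a multiplier `s ∉ p`. -/
lemma exists_list_prod_notMem {R : Type*} [CommRing R] [IsNoetherianRing R] (d : ℕ) :
    ∀ c : LTSeries (PrimeSpectrum R), c.length = d → ∃ l : List R, l.length = d ∧
      ∀ s ∉ c.last.asIdeal, s * l.prod ∉ squaresIdeal l := by
  induction d with
  | zero =>
    intro c _
    refine ⟨[], rfl, fun s hs hmem => hs ?_⟩
    have hs0 : s = 0 := by simpa [squaresIdeal] using hmem
    simp [hs0]
  | succ d ih =>
    intro c hc
    obtain ⟨l, hl, hmem⟩ := ih c.eraseLast (by simp [hc])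
    have hlt : c.eraseLast.last < c.last := c.eraseLast_last_rel_last (by omega)
    obtain ⟨x, hxp, hxq⟩ := Set.exists_of_ssubset (show
      (c.eraseLast.last.asIdeal : Set R) ⊂ c.last.asIdeal from hlt)
    set p := c.last.asIdeal with hp
    set q := c.eraseLast.last.asIdeal with hq
    by_contra! hcon
    let S := Localization.AtPrime p
    have : IsNoetherianRing S := IsLocalization.isNoetherianRing p.primeCompl S inferInstance
    have hloc : ∀ (I : Ideal R) (z : R),
        algebraMap R S z ∈ I.map (algebraMap R S) ↔ ∃ s ∈ p.primeCompl, s * z ∈ I :=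
      fun I z => IsLocalization.algebraMap_mem_map_algebraMap_iff p.primeCompl S I z
    obtain ⟨j, hj⟩ := exists_pow_mul_mem ((squaresIdeal l).map (algebraMap R S))
      (algebraMap R S x) (algebraMap R S l.prod)
      ((IsLocalization.AtPrime.to_map_mem_maximal_iff S p x).2 hxp) (by
        intro m
        obtain ⟨s, hs, hsm⟩ := hcon (x ^ m :: l) (by simp [hl])
        rw [squaresIdeal_cons, List.prod_cons] at hsm
        have := (hloc _ _).2 ⟨s, hs, hsm⟩
        simpa [Ideal.map_sup, Ideal.map_span] using this)
    rw [← map_pow, ← map_mul, hloc] at hj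
    obtain ⟨s, hs, hsj⟩ := hj
    -- `s * x ^ j` is a unit in the localization at the smaller prime `q`.
    refine hmem (s * x ^ j) ?_ (by rwa [mul_assoc])
    intro hq'
    rcases c.eraseLast.last.isPrime.mem_or_mem hq' with h1 | h1
    · exact hs (hlt.le h1)
    · exact hxq (c.eraseLast.last.isPrime.mem_of_pow_mem _ h1)

/-- Pair up the factors: `y * z` is a root of `T ^ 2 - y ^ 2 * z ^ 2`. -/
lemma list_prod_mem_intClosure_pow {R : Type*} [CommRing R] (J : Ideal R) (n : ℕ) :
    ∀ l : List R, l.length = 2 * n → (∀ y ∈ l, y ^ 2 ∈ J) →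
      l.prod ∈ Ideal.intClosure J ^ n := by
  induction n with
  | zero => intro l _ _; simp
  | succ n ih =>
    intro l hl hJ
    match l, hl, hJ with
    | y :: z :: l, hl, hJ =>
      have hyz : y * z ∈ Ideal.intClosure J := by
        refine Ideal.subset_span ⟨2, by norm_num,
          fun i => if i = 2 then -(y ^ 2 * z ^ 2) else 0, ?_, ?_⟩
        · intro i _ _
          dsimp only
          split_ifs with hi
          · subst hi
            rw [pow_two J]
            exact neg_mem (Ideal.mul_mem_mul (hJ y (by simp)) (hJ z (by simp)))
          · exact zero_mem _
        · rw [show Finset.Icc 1 2 = {1, 2} from rfl]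
          simp
          ring
      have := ih l (by simp at hl; omega) (fun w hw => hJ w (by simp [hw]))
      rw [List.prod_cons, List.prod_cons, ← mul_assoc, pow_succ']
      exact Ideal.mul_mem_mul hyz this

/-- If a commutative noetherian ring `R` has `i(R) < ∞`, i.e. there is `k ≥ 0` with
`\overline J ^ n ⊆ J ^ (n - k)` for every ideal `J` and every `n ≥ k`, then the Krull
dimension of `R` is finite. -/
theorem finite_dim_of_intDimBound {R : Type*} [CommRing R] [IsNoetherianRing R]
    (h : ∃ k : ℕ, IntDimBound R k) :
    ∃ d : ℕ, ringKrullDim R ≤ d := by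
  obtain ⟨k, hk⟩ := h
  refine ⟨2 * (k + 1), ?_⟩
  by_contra! hlt
  obtain ⟨c, hc⟩ := (Order.le_krullDim_iff (n := 2 * (k + 1))).1
    (by simpa [ringKrullDim] using hlt.le)
  obtain ⟨l, hl, hmem⟩ := exists_list_prod_notMem _ c hc
  have h1 := hk (squaresIdeal l) (k + 1) (by omega)
    (list_prod_mem_intClosure_pow _ (k + 1) l hl
      (fun y hy => Ideal.subset_span ⟨y, hy, rfl⟩))
  refine hmem 1 (fun h => c.last.isPrime.ne_top ((Ideal.eq_top_iff_one _).2 h)) ?_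
  simpa using h1
end

section
/- Let R be a commutative noetherian ring with nilradical Q and R_red = R/Q. If k ≥ 0 is an integer such that \overline{J}^n ⊆ J^{n−k} for every ideal J of R and every n ≥ k, then the same holds with the same k for all ideals of R_red; consequently i(R_red) ≤ i(R). -/
open Polynomial in
/-- `p` is monic of degree `n` and its coefficient at `X ^ j` lies in `J ^ (n - j)`. The monic
condition is phrased by a degree bound and the coefficient at `n`, so that the zero ring needs no
special treatment. -/
def IsReesMonic {R : Type*} [CommRing R] (J : Ideal R) (n : ℕ) (p : R[X]) : Prop :=
  p.natDegree ≤ n ∧ p.coeff n = 1 ∧ ∀ j, p.coeff j ∈ J ^ (n - j)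

section

open Polynomial

variable {R : Type*} [CommRing R] {J : Ideal R}

lemma IsReesMonic.one : IsReesMonic J 0 (1 : R[X]) := by
  refine ⟨by simp, by simp, fun j => by simp⟩

lemma IsReesMonic.mul {n m : ℕ} {p q : R[X]} (hp : IsReesMonic J n p)
    (hq : IsReesMonic J m q) : IsReesMonic J (n + m) (p * q) := by
  refine ⟨natDegree_mul_le_of_le hp.1 hq.1, ?_, fun j => ?_⟩
  · rw [coeff_mul_add_eq_of_natDegree_le hp.1 hq.1, hp.2.1, hq.2.1, one_mul]
  · rw [coeff_mul]
    refine Ideal.sum_mem _ fun ab hab => ?_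
    have h := Finset.HasAntidiagonal.mem_antidiagonal.1 hab
    refine Ideal.pow_le_pow_right (show n + m - j ≤ (n - ab.1) + (m - ab.2) by omega) ?_
    rw [pow_add]
    exact Ideal.mul_mem_mul (hp.2.2 _) (hq.2.2 _)

lemma IsReesMonic.pow {n : ℕ} {p : R[X]} (hp : IsReesMonic J n p) (m : ℕ) :
    IsReesMonic J (m * n) (p ^ m) := by
  induction m with
  | zero => simpa using IsReesMonic.one
  | succ m ih => rw [pow_succ, add_mul, one_mul]; exact ih.mul hp

lemma sum_Icc_reflect {M : Type*} [AddCommMonoid M] (n : ℕ) (f : ℕ → M) :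
    ∑ i ∈ Finset.Icc 1 n, f (n - i) = ∑ j ∈ Finset.range n, f j := by
  refine Finset.sum_nbij' (fun i => n - i) (fun j => n - j) ?_ ?_ ?_ ?_ (fun _ _ => rfl) <;>
    intro i hi <;> simp only [Finset.mem_Icc, Finset.mem_range] at * <;> omega

lemma IsReesMonic.isIntegralOverIdeal {n : ℕ} {p : R[X]} (hp : IsReesMonic J n p) (hn : 0 < n)
    {x : R} (hx : p.eval x = 0) : IsIntegralOverIdeal J x := by
  refine ⟨n, hn, fun i => p.coeff (n - i), fun i _ hi => ?_, ?_⟩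
  · simpa [Nat.sub_sub_self hi] using hp.2.2 (n - i)
  · rw [sum_Icc_reflect n fun j => p.coeff j * x ^ j, ← hx,
      eval_eq_sum_range' (Nat.lt_succ_of_le hp.1), Finset.sum_range_succ, hp.2.1]
    ring

/-- A left-hand side of an equation of integral dependence over `J` is the value of a polynomial
satisfying `IsReesMonic`. -/
lemma exists_isReesMonic (n : ℕ) (a : ℕ → R) (ha : ∀ i, 1 ≤ i → i ≤ n → a i ∈ J ^ i) (x : R) :
    ∃ p : R[X], IsReesMonic J n p ∧
      p.eval x = x ^ n + ∑ i ∈ Finset.Icc 1 n, a i * x ^ (n - i) := by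
  have hsum : ∑ i ∈ Finset.Icc 1 n, a i * x ^ (n - i) =
      ∑ j ∈ Finset.range n, a (n - j) * x ^ j := by
    rw [← sum_Icc_reflect]
    refine Finset.sum_congr rfl fun i hi => ?_
    rw [Nat.sub_sub_self (Finset.mem_Icc.1 hi).2]
  have hc (j : ℕ) : (X ^ n + ∑ j ∈ Finset.range n, C (a (n - j)) * X ^ j : R[X]).coeff j =
      (if j = n then 1 else 0) + if j < n then a (n - j) else 0 := by
    simp [coeff_X_pow]
  refine ⟨X ^ n + ∑ j ∈ Finset.range n, C (a (n - j)) * X ^ j, ⟨?_, ?_, fun j => ?_⟩, ?_⟩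
  · rw [natDegree_le_iff_coeff_eq_zero]
    intro j hj
    rw [hc, if_neg (by omega), if_neg (by omega), add_zero]
  · simp [hc]
  · rw [hc]
    rcases lt_or_ge j n with h | h
    · simpa [h, h.ne] using ha (n - j) (by omega) (by omega)
    · simp [Nat.sub_eq_zero_of_le h]
  · simp [hsum, eval_finsetSum]

/-- Integrality over an ideal of the reduced quotient lifts to integrality over its preimage. -/
lemma isIntegralOverIdeal_comap (J' : Ideal (R ⧸ nilradical R)) {x : R}
    (hx : IsIntegralOverIdeal J' (Ideal.Quotient.mk (nilradical R) x)) :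
    IsIntegralOverIdeal (J'.comap (Ideal.Quotient.mk (nilradical R))) x := by
  obtain ⟨n, hn, a, ha, h⟩ := hx
  have hsurj := Ideal.Quotient.mk_surjective (I := nilradical R)
  have hlift : ∀ i, ∃ b : R, 1 ≤ i → i ≤ n →
      b ∈ (J'.comap (Ideal.Quotient.mk (nilradical R))) ^ i ∧
        Ideal.Quotient.mk (nilradical R) b = a i := by
    intro i
    by_cases hi : 1 ≤ i ∧ i ≤ n
    · have := ha i hi.1 hi.2
      rw [← Ideal.map_comap_of_surjective _ hsurj J', ← Ideal.map_pow,
        Ideal.mem_map_iff_of_surjective _ hsurj] at this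
      obtain ⟨b, hb, hba⟩ := this
      exact ⟨b, fun _ _ => ⟨hb, hba⟩⟩
    · exact ⟨0, fun h1 h2 => absurd ⟨h1, h2⟩ hi⟩
  choose b hb using hlift
  obtain ⟨p, hp, hpx⟩ := exists_isReesMonic n b (fun i h1 h2 => (hb i h1 h2).1) x
  have hnil : p.eval x ∈ nilradical R := by
    rw [← Ideal.Quotient.eq_zero_iff_mem, hpx, ← h, map_add, map_pow, map_sum]
    congr 1
    refine Finset.sum_congr rfl fun i hi => ?_
    rw [map_mul, map_pow, (hb i (Finset.mem_Icc.1 hi).1 (Finset.mem_Icc.1 hi).2).2]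
  obtain ⟨m, hm⟩ := mem_nilradical.1 hnil
  -- The exponent `m + 1` keeps the degree positive even when `m = 0`.
  refine (hp.pow (m + 1)).isIntegralOverIdeal (by positivity) ?_
  rw [eval_pow, pow_succ, hm, zero_mul]

lemma intClosure_le_map_comap (J' : Ideal (R ⧸ nilradical R)) :
    J'.intClosure ≤ ((J'.comap (Ideal.Quotient.mk (nilradical R))).intClosure).map
      (Ideal.Quotient.mk (nilradical R)) := by
  refine Ideal.span_le.2 fun y hy => ?_
  obtain ⟨x, rfl⟩ := Ideal.Quotient.mk_surjective y
  exact Ideal.mem_map_of_mem _ (Ideal.subset_span (isIntegralOverIdeal_comap J' hy))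

lemma IntDimBound.quotient_nilradical {k : ℕ} (h : IntDimBound R k) :
    IntDimBound (R ⧸ nilradical R) k := by
  intro J' n hn
  refine (Ideal.pow_right_mono (intClosure_le_map_comap J') n).trans ?_
  rw [← Ideal.map_pow]
  refine (Ideal.map_mono (h _ n hn)).trans ?_
  rw [Ideal.map_pow, Ideal.map_comap_of_surjective _ Ideal.Quotient.mk_surjective]

end

/-- Let `R` be a commutative noetherian ring with nilradical `Q` and `R_red = R ⧸ Q`. If
`k ≥ 0` satisfies `\overline J ^ n ⊆ J ^ (n - k)` for every ideal `J` of `R` and every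
`n ≥ k`, then the same holds with the same `k` for all ideals of `R_red`; consequently
`i(R_red) ≤ i(R)`. -/
theorem intDimBound_quotient_nilradical {R : Type*} [CommRing R] [IsNoetherianRing R] :
    (∀ k : ℕ, IntDimBound R k → IntDimBound (R ⧸ nilradical R) k) ∧
      integralDimension (R ⧸ nilradical R) ≤ integralDimension R := by
  refine ⟨fun k h => h.quotient_nilradical, sInf_le_sInf ?_⟩
  rintro _ ⟨k, rfl, h⟩
  exact ⟨k, rfl, h.quotient_nilradical⟩
end
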